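/- arXiv:2310.06416 — 8 statements merged into one kernel-verified Lean document; each statement's English description precedes it below -/
import Mathlib

section
/- Fix r > 0, x_0, x_R ∈ ℝ, t > 0 and s ∈ ℝ. Let p(x,t) = f_L(x) + e^{−rt}·( f_{N(x_0,t)}(x) − (f_{N(0,t)} * f_L)(x) ), where f_L(x) = √(r/2)·e^{−√(2r)·|x − x_R|}, f_{N(m,t)}(x) = (2πt)^{−1/2}·e^{−(x−m)²/(2t)}, and * denotes convolution (f*g)(x) = ∫_ℝ f(x−y)g(y) dy. Then ∫_ℝ p(x,t)·e^{i s x} dx = r·e^{i s x_R}/(r + s²/2) + (e^{i s x_0} − r·e^{i s x_R}/(r + s²/2))·e^{−(r + s²/2)·t}. -/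
open MeasureTheory

/-! The transform `f ↦ ∫ f(x) e^{isx} dx` is linear and turns convolutions into products. The
Laplace density of rate `a = √(2r)` splits at its mean into two exponential integrals, which gives
the factor `a² / (a² + s²) = r / (r + s²/2)`, and a Gaussian of variance `t` contributes
`e^{-s²t/2}`, which merges with the survival probability `e^{-rt}`. -/

open Complex ProbabilityTheory Set
open scoped FourierTransform Convolution NNReal

/-- The Fourier transform of `f` in the convention of characteristic functions: the frequency `s` is
angular and the exponent carries a plus sign. As a Bochner integral it is `0` when `f` is not
integrable. -/
noncomputable def charTransform (f : ℝ → ℂ) (s : ℝ) : ℂ :=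
  ∫ x : ℝ, f x * exp (I * s * x)

section CharTransform

variable {f g h : ℝ → ℂ}

lemma integrable_mul_exp_I_mul (hf : Integrable f) (s : ℝ) :
    Integrable fun x : ℝ ↦ f x * exp (I * s * x) :=
  hf.mul_bdd (c := 1) (by fun_prop) <| .of_forall fun x ↦ by simp [norm_exp]

lemma charTransform_add (hf : Integrable f) (hg : Integrable g) (s : ℝ) :
    charTransform (fun x ↦ f x + g x) s = charTransform f s + charTransform g s := by
  simp only [charTransform, add_mul]
  exact integral_add (integrable_mul_exp_I_mul hf s) (integrable_mul_exp_I_mul hg s)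

lemma charTransform_sub (hf : Integrable f) (hg : Integrable g) (s : ℝ) :
    charTransform (fun x ↦ f x - g x) s = charTransform f s - charTransform g s := by
  simp only [charTransform, sub_mul]
  exact integral_sub (integrable_mul_exp_I_mul hf s) (integrable_mul_exp_I_mul hg s)

lemma charTransform_const_mul (c : ℂ) (f : ℝ → ℂ) (s : ℝ) :
    charTransform (fun x ↦ c * f x) s = c * charTransform f s := by
  simp only [charTransform, mul_assoc, integral_const_mul]

lemma charTransform_comp_sub_right (f : ℝ → ℂ) (m s : ℝ) :
    charTransform (fun x ↦ f (x - m)) s = exp (I * s * m) * charTransform f s := by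
  calc ∫ x : ℝ, f (x - m) * exp (I * s * x)
      = ∫ x : ℝ, f x * exp (I * s * ↑(x + m)) := by
        simpa only [sub_add_cancel] using
          integral_sub_right_eq_self (fun x : ℝ ↦ f x * exp (I * s * ↑(x + m))) m
    _ = ∫ x : ℝ, exp (I * s * m) * (f x * exp (I * s * x)) := by
        simp only [ofReal_add, mul_add, Complex.exp_add, mul_comm, mul_left_comm]
    _ = exp (I * s * m) * charTransform f s := integral_const_mul _ _

lemma charTransform_eq_fourier (f : ℝ → ℂ) (s : ℝ) :
    charTransform f s = 𝓕 f (-s / (2 * Real.pi)) := by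
  rw [Real.fourier_real_eq_integral_exp_smul, charTransform]
  congr with x
  rw [smul_eq_mul, mul_comm]
  congr 2
  push_cast
  field_simp

lemma integrable_integral_sub_mul (hf : Integrable f) (hg : Integrable g) :
    Integrable fun x ↦ ∫ y, f (x - y) * g y := by
  have hconv := hf.integrable_convolution (ContinuousLinearMap.mul ℂ ℂ) hg
  exact hconv.congr <| .of_forall fun x ↦ convolution_mul_swap

lemma charTransform_integral_sub_mul (hf : Integrable f) (hg : Integrable g) (s : ℝ) :
    charTransform (fun x ↦ ∫ y, f (x - y) * g y) s = charTransform f s * charTransform g s := by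
  have hconv : (fun x ↦ ∫ y, f (x - y) * g y) = f ⋆[ContinuousLinearMap.mul ℂ ℂ] g :=
    funext fun x ↦ convolution_mul_swap.symm
  simp only [hconv, charTransform_eq_fourier, Real.fourier_mul_convolution_eq hf hg]

lemma charTransform_add_const_mul_sub_integral_sub_mul (hf : Integrable f) (hg : Integrable g)
    (hh : Integrable h) (c : ℂ) (s : ℝ) :
    charTransform (fun x ↦ f x + c * (g x - ∫ y, h (x - y) * f y)) s =
      charTransform f s + c * (charTransform g s - charTransform h s * charTransform f s) := by
  have hconv := integrable_integral_sub_mul hh hf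
  have hdiff : Integrable fun x ↦ c * (g x - ∫ y, h (x - y) * f y) := (hg.sub hconv).const_mul c
  rw [charTransform_add hf hdiff, charTransform_const_mul, charTransform_sub hg hconv,
    charTransform_integral_sub_mul hh hf]

end CharTransform

lemma charTransform_gaussianPDFReal (m : ℝ) {v : ℝ≥0} (hv : v ≠ 0) (s : ℝ) :
    charTransform (fun x ↦ gaussianPDFReal m v x) s =
      exp (I * s * m) * exp (-(s ^ 2 / 2) * v) := by
  calc charTransform (fun x ↦ gaussianPDFReal m v x) s
      = charFun (gaussianReal m v) s := by
        rw [charFun_apply_real, integral_gaussianReal_eq_integral_smul hv, charTransform]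
        simp only [real_smul, mul_comm I, mul_right_comm]
    _ = exp (I * s * m) * exp (-(s ^ 2 / 2) * v) := by
        rw [charFun_gaussianReal, ← Complex.exp_add]
        ring_nf

section TwoSidedExponential

variable {a z : ℂ}

lemma eqOn_exp_neg_mul_abs_add_mul_Iic (a z : ℂ) :
    EqOn (fun x : ℝ ↦ exp (-a * |x| + z * x)) (fun x : ℝ ↦ exp ((z + a) * x)) (Iic 0) := by
  intro x hx
  simp only [abs_of_nonpos (mem_Iic.1 hx), ofReal_neg]
  ring_nf

lemma eqOn_exp_neg_mul_abs_add_mul_Ioi (a z : ℂ) :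
    EqOn (fun x : ℝ ↦ exp (-a * |x| + z * x)) (fun x : ℝ ↦ exp ((z - a) * x)) (Ioi 0) := by
  intro x hx
  simp only [abs_of_pos (mem_Ioi.1 hx)]
  ring_nf

lemma integrableOn_exp_neg_mul_abs_add_mul_Iic (h : -a.re < z.re) :
    IntegrableOn (fun x : ℝ ↦ exp (-a * |x| + z * x)) (Iic 0) :=
  (integrableOn_congr_fun (eqOn_exp_neg_mul_abs_add_mul_Iic a z) measurableSet_Iic).2 <|
    integrableOn_exp_mul_complex_Iic (by rw [add_re]; linarith) 0

lemma integrableOn_exp_neg_mul_abs_add_mul_Ioi (h : z.re < a.re) :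
    IntegrableOn (fun x : ℝ ↦ exp (-a * |x| + z * x)) (Ioi 0) :=
  (integrableOn_congr_fun (eqOn_exp_neg_mul_abs_add_mul_Ioi a z) measurableSet_Ioi).2 <|
    integrableOn_exp_mul_complex_Ioi (by rw [sub_re]; linarith) 0

lemma integrable_exp_neg_mul_abs_add_mul (h : |z.re| < a.re) :
    Integrable fun x : ℝ ↦ exp (-a * |x| + z * x) := by
  rw [← integrableOn_univ, ← Iic_union_Ioi (a := (0 : ℝ))]
  exact (integrableOn_exp_neg_mul_abs_add_mul_Iic (abs_lt.1 h).1).union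
    (integrableOn_exp_neg_mul_abs_add_mul_Ioi (abs_lt.1 h).2)

lemma integral_exp_neg_mul_abs_add_mul (h : |z.re| < a.re) :
    ∫ x : ℝ, exp (-a * |x| + z * x) = 2 * a / (a ^ 2 - z ^ 2) := by
  obtain ⟨hneg, hpos⟩ := abs_lt.1 h
  have hadd_re : 0 < (z + a).re := by rw [add_re]; linarith
  have hsub_re : (z - a).re < 0 := by rw [sub_re]; linarith
  have hadd : z + a ≠ 0 := ne_of_apply_ne re hadd_re.ne'
  have hsub : z - a ≠ 0 := ne_of_apply_ne re hsub_re.ne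
  have hsq : a ^ 2 - z ^ 2 ≠ 0 := by
    rw [show a ^ 2 - z ^ 2 = -((z + a) * (z - a)) by ring]
    exact neg_ne_zero.2 (mul_ne_zero hadd hsub)
  calc ∫ x : ℝ, exp (-a * |x| + z * x)
      = (∫ x : ℝ in Iic 0, exp ((z + a) * x)) + ∫ x : ℝ in Ioi 0, exp ((z - a) * x) := by
        rw [← intervalIntegral.integral_Iic_add_Ioi
            (integrableOn_exp_neg_mul_abs_add_mul_Iic hneg)
            (integrableOn_exp_neg_mul_abs_add_mul_Ioi hpos),
          setIntegral_congr_fun measurableSet_Iic (eqOn_exp_neg_mul_abs_add_mul_Iic a z),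
          setIntegral_congr_fun measurableSet_Ioi (eqOn_exp_neg_mul_abs_add_mul_Ioi a z)]
    _ = 1 / (z + a) - 1 / (z - a) := by
        rw [integral_exp_mul_complex_Iic hadd_re, integral_exp_mul_complex_Ioi hsub_re]
        simp only [ofReal_zero, mul_zero, Complex.exp_zero]
        ring
    _ = 2 * a / (a ^ 2 - z ^ 2) := by
        field_simp
        ring

end TwoSidedExponential

/-- The density of the Laplace distribution with mean `m` and scale `1 / a`; the rate `a` rather
than the scale is the parameter because it is what enters the characteristic function. -/
noncomputable def laplacePDFReal (m a x : ℝ) : ℝ :=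
  a / 2 * Real.exp (-a * |x - m|)

section Laplace

variable {a : ℝ}

lemma integrable_laplacePDFReal (m : ℝ) (ha : 0 < a) : Integrable (laplacePDFReal m a) := by
  have h : Integrable fun x : ℝ ↦ Real.exp (-a * |x|) := by
    simpa [exp_ofReal_re, ← ofReal_mul, ← ofReal_neg] using
      (integrable_exp_neg_mul_abs_add_mul (a := a) (z := 0) (by simpa)).re
  exact (h.comp_sub_right m).const_mul (a / 2)

lemma charTransform_laplacePDFReal (m : ℝ) (ha : 0 < a) (s : ℝ) :
    charTransform (fun x ↦ laplacePDFReal m a x) s =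
      a ^ 2 * exp (I * s * m) / (a ^ 2 + s ^ 2) := by
  have hcentred : charTransform (fun x ↦ exp (-a * |x|)) s = 2 * a / (a ^ 2 + s ^ 2) := by
    have h := integral_exp_neg_mul_abs_add_mul (a := a) (z := I * s) (by simpa)
    simpa only [charTransform, Complex.exp_add, mul_pow, I_sq, neg_one_mul, sub_neg_eq_add] using h
  calc charTransform (fun x ↦ laplacePDFReal m a x) s
      = charTransform (fun x ↦ a / 2 * exp (-a * |x - m|)) s := by
        simp [laplacePDFReal]
    _ = a / 2 * (exp (I * s * m) * (2 * a / (a ^ 2 + s ^ 2))) := by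
        rw [charTransform_const_mul, charTransform_comp_sub_right (fun x ↦ exp (-a * |x|)),
          hcentred]
    _ = a ^ 2 * exp (I * s * m) / (a ^ 2 + s ^ 2) := by ring

lemma laplacePDFReal_sqrt_two_mul {r : ℝ} (hr : 0 ≤ r) (m x : ℝ) :
    laplacePDFReal m √(2 * r) x = √(r / 2) * Real.exp (-√(2 * r) * |x - m|) := by
  have h : √(2 * r) / 2 = √(r / 2) := by
    rw [← Real.sqrt_sq (x := √(2 * r) / 2) (by positivity), div_pow, Real.sq_sqrt (by positivity)]
    ring_nf
  rw [laplacePDFReal, h]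

lemma charTransform_laplacePDFReal_sqrt_two_mul {r : ℝ} (hr : 0 < r) (m s : ℝ) :
    charTransform (fun x ↦ laplacePDFReal m √(2 * r) x) s =
      r * exp (I * s * m) / (r + s ^ 2 / 2) := by
  have hsq : ((√(2 * r) : ℝ) : ℂ) ^ 2 = 2 * r := by
    rw [← ofReal_pow, Real.sq_sqrt (by positivity), ofReal_mul, ofReal_ofNat]
  rw [charTransform_laplacePDFReal m (by positivity), hsq,
    show (2 * r + s ^ 2 : ℂ) = 2 * (r + s ^ 2 / 2) by ring, mul_assoc,
    mul_div_mul_left _ _ two_ne_zero]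

end Laplace

/-- The explicit density
`p(x,t) = f_L(x) + e^{-rt}·(f_{N(x0,t)}(x) - (f_{N(0,t)} * f_L)(x))`
of Brownian motion started at `x0` with Poissonian resetting at rate `r > 0`
to `xR` has Fourier transform
`φ_t(s) = r·e^{isxR}/(r + s²/2) + (e^{isx0} - r·e^{isxR}/(r + s²/2))·e^{-(r+s²/2)t}`. -/
theorem fourier_resetting_pdf (r x0 xR t s : ℝ) (hr : 0 < r) (ht : 0 < t)
    (fL fN0 fNx0 p : ℝ → ℝ)
    (hfL : ∀ x, fL x = Real.sqrt (r / 2) * Real.exp (-(Real.sqrt (2 * r)) * |x - xR|))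
    (hfN0 : ∀ x, fN0 x = 1 / Real.sqrt (2 * Real.pi * t) * Real.exp (-x ^ 2 / (2 * t)))
    (hfNx0 : ∀ x, fNx0 x =
      1 / Real.sqrt (2 * Real.pi * t) * Real.exp (-(x - x0) ^ 2 / (2 * t)))
    (hp : ∀ x, p x = fL x + Real.exp (-r * t) * (fNx0 x - ∫ y : ℝ, fN0 (x - y) * fL y)) :
    (∫ x : ℝ, ((p x : ℝ) : ℂ) * Complex.exp (Complex.I * (s : ℂ) * (x : ℂ))) =
      (r : ℂ) * Complex.exp (Complex.I * (s : ℂ) * (xR : ℂ)) /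
          ((r : ℂ) + (s : ℂ) ^ 2 / 2) +
        (Complex.exp (Complex.I * (s : ℂ) * (x0 : ℂ)) -
            (r : ℂ) * Complex.exp (Complex.I * (s : ℂ) * (xR : ℂ)) /
              ((r : ℂ) + (s : ℂ) ^ 2 / 2)) *
          Complex.exp (-((r : ℂ) + (s : ℂ) ^ 2 / 2) * (t : ℂ)) := by
  lift t to ℝ≥0 using ht.le
  have hv : t ≠ 0 := by rintro rfl; simp at ht
  obtain rfl : fL = laplacePDFReal xR √(2 * r) :=
    funext fun x ↦ by rw [hfL, laplacePDFReal_sqrt_two_mul hr.le]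
  obtain rfl : fN0 = gaussianPDFReal 0 t := funext fun x ↦ by simp [hfN0, gaussianPDFReal]
  obtain rfl : fNx0 = gaussianPDFReal x0 t := funext fun x ↦ by simp [hfNx0, gaussianPDFReal]
  have hL : Integrable fun x ↦ (laplacePDFReal xR √(2 * r) x : ℂ) :=
    (integrable_laplacePDFReal xR (by positivity)).ofReal
  have hN (m : ℝ) : Integrable fun x ↦ (gaussianPDFReal m t x : ℂ) :=
    (integrable_gaussianPDFReal m t).ofReal
  have hpC (x : ℝ) : (p x : ℂ) = laplacePDFReal xR √(2 * r) x + exp (-r * t) *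
      (gaussianPDFReal x0 t x -
        ∫ y, (gaussianPDFReal 0 t (x - y) : ℂ) * laplacePDFReal xR √(2 * r) y) := by
    simp [hp, ← integral_complex_ofReal]
  have hexp : exp (-(r + s ^ 2 / 2) * (t : ℝ)) = exp (-r * t) * exp (-(s ^ 2 / 2 : ℂ) * t) := by
    rw [← Complex.exp_add, neg_add, add_mul]
  change charTransform (fun x ↦ p x) s = _
  simp only [hpC]
  rw [charTransform_add_const_mul_sub_integral_sub_mul hL (hN x0) (hN 0),
    charTransform_gaussianPDFReal x0 hv, charTransform_gaussianPDFReal 0 hv,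
    charTransform_laplacePDFReal_sqrt_two_mul hr, hexp, ofReal_zero, mul_zero, Complex.exp_zero]
  ring
end

section
/- Fix r > 0, x_0, x_R ∈ ℝ. Let p(x,t) = f_L(x) + e^{−rt}·( f_{N(x_0,t)}(x) − (f_{N(0,t)} * f_L)(x) ), where f_L(x) = √(r/2)·e^{−√(2r)·|x − x_R|}, f_{N(m,t)}(x) = (2πt)^{−1/2}·e^{−(x−m)²/(2t)}, and * denotes convolution. Then for every t > 0 and every x ∈ ℝ with x ≠ x_R, the partial derivatives exist and the Fokker–Planck equation ∂_t p(x,t) = (1/2)·∂²_{xx} p(x,t) − r·p(x,t) holds. -/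
open MeasureTheory

/-!
The Fokker–Planck equation away from `xR` is linear, so each summand of `p` is treated separately.
The Laplace density is locally `c * exp (± √(2r) * (x - xR))`, a stationary solution. The Gaussian
kernel solves the heat equation, and since its derivatives are bounded uniformly for times bounded
away from `0`, so does its convolution with an integrable function. Finally, multiplying a solution
of the heat equation by `exp (-r * t)` produces exactly the killing term `-r * p`.
-/

open Filter Set Topology

/-- `u : space → time → ℝ` solves `∂ₜ u = (1/2) ∂²ₓₓ u - r u` at the point `(x, t)`. The first space
derivative `ux` is required on a neighbourhood of `x`, which makes the notion linear in `u`; mere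
differentiability of `deriv (u · t)` at `x` would not. -/
def SolvesFokkerPlanckAt (r : ℝ) (u : ℝ → ℝ → ℝ) (x t : ℝ) : Prop :=
  ∃ (ut : ℝ) (ux : ℝ → ℝ) (uxx : ℝ),
    HasDerivAt (u x) ut t ∧
    (∀ᶠ y in 𝓝 x, HasDerivAt (fun z => u z t) (ux y) y) ∧
    HasDerivAt ux uxx x ∧
    ut = 1 / 2 * uxx - r * u x t

namespace SolvesFokkerPlanckAt

variable {r x t : ℝ} {u v : ℝ → ℝ → ℝ}

theorem exists_hasDerivAt (hu : SolvesFokkerPlanckAt r u x t) :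
    ∃ ut ux uxx : ℝ,
      HasDerivAt (fun τ => u x τ) ut t ∧
      HasDerivAt (fun y => u y t) ux x ∧
      HasDerivAt (deriv fun y => u y t) uxx x ∧
      ut = 1 / 2 * uxx - r * u x t := by
  obtain ⟨ut, ux, uxx, hut, hux, huxx, heq⟩ := hu
  have hderiv : (deriv fun y => u y t) =ᶠ[𝓝 x] ux := hux.mono fun _ hy => hy.deriv
  exact ⟨ut, ux x, uxx, hut, hux.self_of_nhds, huxx.congr_of_eventuallyEq hderiv, heq⟩

theorem congr (hu : SolvesFokkerPlanckAt r u x t) (htime : v x =ᶠ[𝓝 t] u x)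
    (hspace : ∀ᶠ y in 𝓝 x, v y t = u y t) : SolvesFokkerPlanckAt r v x t := by
  obtain ⟨ut, ux, uxx, hut, hux, huxx, heq⟩ := hu
  refine ⟨ut, ux, uxx, hut.congr_of_eventuallyEq htime, ?_, huxx, ?_⟩
  · filter_upwards [hux, hspace.eventually_nhds] with y hy hvu
    exact hy.congr_of_eventuallyEq hvu
  · rw [heq, htime.self_of_nhds]

theorem add (hu : SolvesFokkerPlanckAt r u x t) (hv : SolvesFokkerPlanckAt r v x t) :
    SolvesFokkerPlanckAt r (fun y τ => u y τ + v y τ) x t := by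
  obtain ⟨ut, ux, uxx, hut, hux, huxx, hu_eq⟩ := hu
  obtain ⟨vt, vx, vxx, hvt, hvx, hvxx, hv_eq⟩ := hv
  refine ⟨ut + vt, fun y => ux y + vx y, uxx + vxx, hut.fun_add hvt, ?_, huxx.fun_add hvxx, ?_⟩
  · filter_upwards [hux, hvx] with y hy hy' using hy.fun_add hy'
  · rw [hu_eq, hv_eq]
    ring

theorem const_mul (c : ℝ) (hu : SolvesFokkerPlanckAt r u x t) :
    SolvesFokkerPlanckAt r (fun y τ => c * u y τ) x t := by
  obtain ⟨ut, ux, uxx, hut, hux, huxx, heq⟩ := hu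
  refine ⟨c * ut, fun y => c * ux y, c * uxx, hut.const_mul c,
    hux.mono fun _ hy => hy.const_mul c, huxx.const_mul c, ?_⟩
  rw [heq]
  ring

theorem sub (hu : SolvesFokkerPlanckAt r u x t) (hv : SolvesFokkerPlanckAt r v x t) :
    SolvesFokkerPlanckAt r (fun y τ => u y τ - v y τ) x t := by
  simpa only [neg_one_mul, ← sub_eq_add_neg] using hu.add (hv.const_mul (-1))

theorem exp_neg_mul (k : ℝ) (hu : SolvesFokkerPlanckAt r u x t) :
    SolvesFokkerPlanckAt (r + k) (fun y τ => Real.exp (-k * τ) * u y τ) x t := by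
  obtain ⟨ut, ux, uxx, hut, hux, huxx, heq⟩ := hu
  have hexp : HasDerivAt (fun τ => Real.exp (-k * τ)) (Real.exp (-k * t) * -k) t := by
    simpa using ((hasDerivAt_id t).const_mul (-k)).exp
  refine ⟨_, fun y => Real.exp (-k * t) * ux y, Real.exp (-k * t) * uxx, hexp.fun_mul hut,
    hux.mono fun _ hy => hy.const_mul _, huxx.const_mul _, ?_⟩
  rw [heq]
  ring

end SolvesFokkerPlanckAt

section Laplace

variable {r a : ℝ}

theorem solvesFokkerPlanckAt_exp_mul_sub (ha : a ^ 2 = 2 * r) (c x t : ℝ) :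
    SolvesFokkerPlanckAt r (fun y _ => Real.exp (a * (y - c))) x t := by
  have hexp (y : ℝ) :
      HasDerivAt (fun z => Real.exp (a * (z - c))) (a * Real.exp (a * (y - c))) y := by
    simpa [mul_comm] using (((hasDerivAt_id y).sub_const c).const_mul a).exp
  refine ⟨0, fun y => a * Real.exp (a * (y - c)), a * (a * Real.exp (a * (x - c))),
    hasDerivAt_const _ _, .of_forall hexp, (hexp x).const_mul a, ?_⟩
  linear_combination -(1 / 2 * Real.exp (a * (x - c))) * ha

theorem solvesFokkerPlanckAt_exp_neg_mul_abs_sub (ha : a ^ 2 = 2 * r) {c x : ℝ} (hx : x ≠ c)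
    (t : ℝ) : SolvesFokkerPlanckAt r (fun y _ => Real.exp (-a * |y - c|)) x t := by
  have of_eventuallyEq {b : ℝ} (hb : b ^ 2 = 2 * r)
      (heq : ∀ᶠ y in 𝓝 x, -a * |y - c| = b * (y - c)) :
      SolvesFokkerPlanckAt r (fun y _ => Real.exp (-a * |y - c|)) x t := by
    refine (solvesFokkerPlanckAt_exp_mul_sub hb c x t).congr (.of_forall fun _ => ?_)
      (heq.mono fun y hy => congrArg Real.exp hy)
    exact congrArg Real.exp heq.self_of_nhds
  rcases lt_or_gt_of_ne hx with hlt | hgt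
  · refine of_eventuallyEq ha ?_
    filter_upwards [Iio_mem_nhds hlt] with y hy
    rw [abs_of_neg (sub_neg.2 hy), neg_mul_neg]
  · refine of_eventuallyEq ((neg_sq a).trans ha) ?_
    filter_upwards [Ioi_mem_nhds hgt] with y hy
    rw [abs_of_pos (sub_pos.2 hy)]

theorem integrable_exp_neg_mul_abs_sub (ha : 0 < a) (c : ℝ) :
    Integrable fun x : ℝ => Real.exp (-a * |x - c|) := by
  have hcentred : Integrable fun x : ℝ => Real.exp (-a * ‖x‖) := by
    rw [integrable_fun_norm_addHaar volume (f := fun s => Real.exp (-a * s))]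
    simpa using integrableOn_exp_mul_Ioi (neg_lt_zero.2 ha) 0
  exact hcentred.comp_sub_right c

end Laplace

section ParametricIntegral

variable {α E : Type*} [MeasurableSpace α] {μ : Measure α} [NormedAddCommGroup E]
  [NormedSpace ℝ E]

theorem hasDerivAt_integral_smul_of_norm_deriv_le {k k' : ℝ → α → ℝ} {f : α → E} {s : Set ℝ}
    {t C C' : ℝ} (hf : Integrable f μ) (hs : s ∈ 𝓝 t)
    (hk : ∀ τ ∈ s, AEStronglyMeasurable (k τ) μ) (hk' : AEStronglyMeasurable (k' t) μ)
    (hC : ∀ y, ‖k t y‖ ≤ C) (hC' : ∀ τ ∈ s, ∀ y, ‖k' τ y‖ ≤ C')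
    (hderiv : ∀ τ ∈ s, ∀ y, HasDerivAt (fun τ => k τ y) (k' τ y) τ) :
    HasDerivAt (fun τ => ∫ y, k τ y • f y ∂μ) (∫ y, k' t y • f y ∂μ) t := by
  refine (hasDerivAt_integral_of_dominated_loc_of_deriv_le (F := fun τ y => k τ y • f y)
    (F' := fun τ y => k' τ y • f y) (bound := fun y => C' * ‖f y‖) hs ?_
    (hf.bdd_smul C (hk t (mem_of_mem_nhds hs)) (.of_forall hC))
    (hk'.smul hf.aestronglyMeasurable) (.of_forall fun y τ hτ => ?_) (hf.norm.const_mul C')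
    (.of_forall fun y τ hτ => (hderiv τ hτ y).smul_const (f y))).2
  · filter_upwards [hs] with τ hτ using (hk τ hτ).smul hf.aestronglyMeasurable
  · rw [norm_smul]
    exact mul_le_mul_of_nonneg_right (hC' τ hτ y) (norm_nonneg _)

end ParametricIntegral

section HeatKernel

/-- The centred Gaussian density of variance `t`, i.e. the fundamental solution of
`∂ₜ u = (1/2) ∂²ₓₓ u`. The variance is real, unlike in `ProbabilityTheory.gaussianPDFReal`, so that
one can differentiate in `t`; the value is `0` for `t ≤ 0`. -/
noncomputable def heatKernel (t z : ℝ) : ℝ :=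
  1 / Real.sqrt (2 * Real.pi * t) * Real.exp (-z ^ 2 / (2 * t))

/-- The derivative of `heatKernel t z` in `z`, in closed form. -/
noncomputable def heatKernelSpaceDeriv (t z : ℝ) : ℝ :=
  -(z / t) * heatKernel t z

/-- The derivative of `heatKernel t z` in `t`, in closed form. -/
noncomputable def heatKernelTimeDeriv (t z : ℝ) : ℝ :=
  (z ^ 2 / (2 * t) - 1 / 2) / t * heatKernel t z

variable {s t : ℝ}

theorem heatKernel_zero_right (t : ℝ) : heatKernel t 0 = 1 / Real.sqrt (2 * Real.pi * t) := by
  simp [heatKernel]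

theorem heatKernel_eq_mul_exp (t z : ℝ) :
    heatKernel t z = heatKernel t 0 * Real.exp (-(z ^ 2 / (2 * t))) := by
  rw [heatKernel_zero_right, heatKernel, neg_div]

theorem heatKernel_nonneg (t z : ℝ) : 0 ≤ heatKernel t z := by
  unfold heatKernel
  positivity

theorem continuous_heatKernel (t : ℝ) : Continuous (heatKernel t) := by
  unfold heatKernel
  fun_prop

theorem continuous_heatKernelTimeDeriv (t : ℝ) : Continuous (heatKernelTimeDeriv t) := by
  have := continuous_heatKernel t
  unfold heatKernelTimeDeriv
  fun_prop

theorem hasDerivAt_heatKernel_space (t z : ℝ) :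
    HasDerivAt (heatKernel t) (heatKernelSpaceDeriv t z) z := by
  have hexponent : HasDerivAt (fun y : ℝ => -y ^ 2 / (2 * t)) (-(z / t)) z := by
    refine ((hasDerivAt_pow 2 z).fun_neg.div_const (2 * t)).congr_deriv ?_
    rw [neg_div]
    simp [mul_div_mul_left]
  refine (hexponent.exp.const_mul (1 / Real.sqrt (2 * Real.pi * t))).congr_deriv ?_
  unfold heatKernelSpaceDeriv heatKernel
  ring

theorem hasDerivAt_heatKernelSpaceDeriv (t z : ℝ) :
    HasDerivAt (heatKernelSpaceDeriv t) (2 * heatKernelTimeDeriv t z) z := by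
  have hfactor : HasDerivAt (fun y : ℝ => -(y / t)) (-(1 / t)) z :=
    ((hasDerivAt_id z).div_const t).fun_neg
  refine (hfactor.fun_mul (hasDerivAt_heatKernel_space t z)).congr_deriv ?_
  unfold heatKernelTimeDeriv heatKernelSpaceDeriv
  ring

theorem hasDerivAt_heatKernel_zero_right (ht : 0 < t) :
    HasDerivAt (fun τ => heatKernel τ 0) (-(1 / (2 * t)) * heatKernel t 0) t := by
  have hpos : 0 < 2 * Real.pi * t := by positivity
  have hsqrt := ((hasDerivAt_id t).const_mul (2 * Real.pi)).sqrt hpos.ne'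
  simp only [heatKernel_zero_right, one_div]
  refine (hsqrt.fun_inv (Real.sqrt_ne_zero'.2 hpos)).congr_deriv ?_
  simp only [id_eq, Real.sq_sqrt hpos.le]
  field_simp

theorem hasDerivAt_heatKernel_time (ht : 0 < t) (z : ℝ) :
    HasDerivAt (fun τ => heatKernel τ z) (heatKernelTimeDeriv t z) t := by
  have hexponent : HasDerivAt (fun τ : ℝ => -(z ^ 2 / (2 * τ))) (z ^ 2 / (2 * t ^ 2)) t := by
    have hinv := ((hasDerivAt_inv ht.ne').const_mul (z ^ 2 / 2)).fun_neg
    refine (hinv.congr_of_eventuallyEq (.of_forall fun τ => ?_)).congr_deriv ?_ <;> ring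
  simp only [heatKernel_eq_mul_exp _ z]
  refine ((hasDerivAt_heatKernel_zero_right ht).fun_mul hexponent.exp).congr_deriv ?_
  rw [heatKernelTimeDeriv, heatKernel_eq_mul_exp t z]
  ring

theorem antitoneOn_heatKernel_zero_right : AntitoneOn (fun t => heatKernel t 0) (Ioi 0) := by
  intro s hs t _ hst
  have : 0 < 2 * Real.pi * s := mul_pos Real.two_pi_pos hs
  simp only [heatKernel_zero_right]
  gcongr

theorem heatKernel_le_zero_right (ht : 0 ≤ t) (z : ℝ) : heatKernel t z ≤ heatKernel t 0 := by
  rw [heatKernel_eq_mul_exp]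
  refine mul_le_of_le_one_right (heatKernel_nonneg t 0) (Real.exp_le_one_iff.2 ?_)
  exact neg_nonpos.2 (by positivity)

theorem abs_heatKernel_le (ht : 0 ≤ t) (z : ℝ) : |heatKernel t z| ≤ heatKernel t 0 :=
  (abs_of_nonneg (heatKernel_nonneg t z)).trans_le (heatKernel_le_zero_right ht z)

theorem sq_div_mul_heatKernel_le (t z : ℝ) :
    z ^ 2 / (2 * t) * heatKernel t z ≤ heatKernel t 0 := by
  have hexp : z ^ 2 / (2 * t) * Real.exp (-(z ^ 2 / (2 * t))) ≤ 1 :=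
    (Real.mul_exp_neg_le_exp_neg_one _).trans (Real.exp_le_one_iff.2 (by norm_num))
  rw [heatKernel_eq_mul_exp, mul_left_comm]
  exact mul_le_of_le_one_right (heatKernel_nonneg t 0) hexp

theorem abs_heatKernelTimeDeriv_le (hs : 0 < s) (hst : s ≤ t) (z : ℝ) :
    |heatKernelTimeDeriv t z| ≤ heatKernel s 0 / s := by
  have ht : 0 < t := hs.trans_le hst
  have hfactor : |(z ^ 2 / (2 * t) - 1 / 2) * heatKernel t z| ≤ heatKernel t 0 := by
    have hnonneg := heatKernel_nonneg t z
    have hle := heatKernel_le_zero_right ht.le z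
    have hsq_nonneg : 0 ≤ z ^ 2 / (2 * t) * heatKernel t z := by positivity
    have hsq_le := sq_div_mul_heatKernel_le t z
    rw [abs_le]
    constructor <;> linarith
  calc |heatKernelTimeDeriv t z|
      = |(z ^ 2 / (2 * t) - 1 / 2) * heatKernel t z| / t := by
        rw [heatKernelTimeDeriv, div_mul_eq_mul_div, abs_div, abs_of_pos ht]
    _ ≤ heatKernel s 0 / s :=
        div_le_div₀ (heatKernel_nonneg s 0)
          (hfactor.trans (antitoneOn_heatKernel_zero_right hs ht hst)) hs hst

theorem abs_heatKernelSpaceDeriv_le (ht : 0 < t) (z : ℝ) :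
    |heatKernelSpaceDeriv t z| ≤ heatKernel t 0 / t + 2 * heatKernel t 0 := by
  have hnonneg := heatKernel_nonneg t z
  have hz : |z| ≤ 1 + z ^ 2 := by
    nlinarith [sq_nonneg (|z| - 1), sq_abs z, abs_nonneg z]
  calc |heatKernelSpaceDeriv t z|
      = |z| * (heatKernel t z / t) := by
        rw [heatKernelSpaceDeriv, abs_mul, abs_neg, abs_div, abs_of_pos ht, abs_of_nonneg hnonneg]
        ring
    _ ≤ (1 + z ^ 2) * (heatKernel t z / t) := by gcongr
    _ = heatKernel t z / t + 2 * (z ^ 2 / (2 * t) * heatKernel t z) := by field_simp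
    _ ≤ heatKernel t 0 / t + 2 * heatKernel t 0 := by
        gcongr
        · exact heatKernel_le_zero_right ht.le z
        · exact sq_div_mul_heatKernel_le t z

theorem solvesFokkerPlanckAt_heatKernel_sub (ht : 0 < t) (m x : ℝ) :
    SolvesFokkerPlanckAt 0 (fun y τ => heatKernel τ (y - m)) x t := by
  refine ⟨_, fun y => heatKernelSpaceDeriv t (y - m), _, hasDerivAt_heatKernel_time ht (x - m),
    .of_forall fun y => (hasDerivAt_heatKernel_space t (y - m)).comp_sub_const y m,
    (hasDerivAt_heatKernelSpaceDeriv t (x - m)).comp_sub_const x m, ?_⟩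
  ring

end HeatKernel

section HeatFlow

variable {μ : Measure ℝ} {f : ℝ → ℝ} {t : ℝ}

theorem hasDerivAt_integral_comp_sub_mul (hf : Integrable f μ) {h h' : ℝ → ℝ} {C C' : ℝ}
    (hC : ∀ z, |h z| ≤ C) (hC' : ∀ z, |h' z| ≤ C')
    (hderiv : ∀ z, HasDerivAt h (h' z) z) (x : ℝ) :
    HasDerivAt (fun x => ∫ y, h (x - y) * f y ∂μ) (∫ y, h' (x - y) * f y ∂μ) x := by
  have hh : Continuous h := continuous_iff_continuousAt.2 fun z => (hderiv z).continuousAt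
  have hh' : Measurable h' := by
    simpa only [funext fun z => (hderiv z).deriv] using measurable_deriv h
  exact hasDerivAt_integral_smul_of_norm_deriv_le (k := fun x y => h (x - y))
    (k' := fun x y => h' (x - y)) hf univ_mem
    (fun x _ => (by fun_prop : Continuous fun y => h (x - y)).aestronglyMeasurable)
    (hh'.comp (measurable_const.sub measurable_id)).aestronglyMeasurable
    (fun y => hC (x - y)) (fun x _ y => hC' (x - y))
    (fun x _ y => (hderiv (x - y)).comp_sub_const x y)

theorem hasDerivAt_integral_heatKernel_time (hf : Integrable f μ) (ht : 0 < t) (x : ℝ) :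
    HasDerivAt (fun τ => ∫ y, heatKernel τ (x - y) * f y ∂μ)
      (∫ y, heatKernelTimeDeriv t (x - y) * f y ∂μ) t := by
  have hcont := continuous_heatKernel
  have hcont' := continuous_heatKernelTimeDeriv
  have hhalf : 0 < t / 2 := half_pos ht
  exact hasDerivAt_integral_smul_of_norm_deriv_le (k := fun τ y => heatKernel τ (x - y))
    (k' := fun τ y => heatKernelTimeDeriv τ (x - y)) hf (Ioi_mem_nhds (half_lt_self ht))
    (fun τ _ => (by fun_prop : Continuous fun y => heatKernel τ (x - y)).aestronglyMeasurable)
    (by fun_prop : Continuous fun y => heatKernelTimeDeriv t (x - y)).aestronglyMeasurable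
    (fun y => abs_heatKernel_le ht.le (x - y))
    (fun τ hτ y => abs_heatKernelTimeDeriv_le hhalf (le_of_lt hτ) (x - y))
    (fun τ hτ y => hasDerivAt_heatKernel_time (hhalf.trans hτ) (x - y))

theorem hasDerivAt_integral_heatKernel_space (hf : Integrable f μ) (ht : 0 < t) (x : ℝ) :
    HasDerivAt (fun x => ∫ y, heatKernel t (x - y) * f y ∂μ)
      (∫ y, heatKernelSpaceDeriv t (x - y) * f y ∂μ) x :=
  hasDerivAt_integral_comp_sub_mul hf (abs_heatKernel_le ht.le) (abs_heatKernelSpaceDeriv_le ht)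
    (hasDerivAt_heatKernel_space t) x

theorem hasDerivAt_integral_heatKernelSpaceDeriv (hf : Integrable f μ) (ht : 0 < t) (x : ℝ) :
    HasDerivAt (fun x => ∫ y, heatKernelSpaceDeriv t (x - y) * f y ∂μ)
      (2 * ∫ y, heatKernelTimeDeriv t (x - y) * f y ∂μ) x := by
  have hbound (z : ℝ) : |2 * heatKernelTimeDeriv t z| ≤ 2 * (heatKernel t 0 / t) := by
    rw [abs_mul, abs_two]
    gcongr
    exact abs_heatKernelTimeDeriv_le ht le_rfl z
  simpa only [mul_assoc, integral_const_mul] using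
    hasDerivAt_integral_comp_sub_mul hf (abs_heatKernelSpaceDeriv_le ht) hbound
      (hasDerivAt_heatKernelSpaceDeriv t) x

theorem solvesFokkerPlanckAt_integral_heatKernel (hf : Integrable f μ) (ht : 0 < t) (x : ℝ) :
    SolvesFokkerPlanckAt 0 (fun x t => ∫ y, heatKernel t (x - y) * f y ∂μ) x t := by
  refine ⟨_, fun x => ∫ y, heatKernelSpaceDeriv t (x - y) * f y ∂μ, _,
    hasDerivAt_integral_heatKernel_time hf ht x,
    .of_forall (hasDerivAt_integral_heatKernel_space hf ht),
    hasDerivAt_integral_heatKernelSpaceDeriv hf ht x, ?_⟩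
  ring

end HeatFlow

/-- Away from the resetting point `xR`, the explicit density
`p(x,t) = f_L(x) + e^{-rt}·(f_{N(x0,t)}(x) - (f_{N(0,t)} * f_L)(x))` of Brownian
motion with Poissonian resetting satisfies the Fokker–Planck equation
`∂ₜ p = (1/2)·∂²ₓₓ p - r·p` (the Dirac-delta source term vanishes for `x ≠ xR`). -/
theorem fokker_planck_resetting (r x0 xR : ℝ) (hr : 0 < r)
    (fL : ℝ → ℝ) (fN : ℝ → ℝ → ℝ → ℝ) (p : ℝ → ℝ → ℝ)
    (hfL : ∀ x, fL x = Real.sqrt (r / 2) * Real.exp (-(Real.sqrt (2 * r)) * |x - xR|))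
    (hfN : ∀ m t x, fN m t x =
      1 / Real.sqrt (2 * Real.pi * t) * Real.exp (-(x - m) ^ 2 / (2 * t)))
    (hp : ∀ x t, p x t =
      fL x + Real.exp (-r * t) * (fN x0 t x - ∫ y : ℝ, fN 0 t (x - y) * fL y)) :
    ∀ t : ℝ, 0 < t → ∀ x : ℝ, x ≠ xR →
      ∃ pt px pxx : ℝ,
        HasDerivAt (fun τ => p x τ) pt t ∧
        HasDerivAt (fun y => p y t) px x ∧
        HasDerivAt (deriv fun y => p y t) pxx x ∧
        pt = 1 / 2 * pxx - r * p x t := by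
  intro t ht x hx
  have hrate_sq : Real.sqrt (2 * r) ^ 2 = 2 * r := Real.sq_sqrt (by positivity)
  have hfL_int : Integrable fL := by
    rw [funext hfL]
    exact (integrable_exp_neg_mul_abs_sub (Real.sqrt_pos.2 (by positivity)) xR).const_mul _
  have hfN_kernel (m τ y : ℝ) : fN m τ y = heatKernel τ (y - m) := hfN m τ y
  have hlaplace : SolvesFokkerPlanckAt r (fun y _ => fL y) x t := by
    simpa only [hfL] using
      (solvesFokkerPlanckAt_exp_neg_mul_abs_sub hrate_sq hx t).const_mul (Real.sqrt (r / 2))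
  have htransient : SolvesFokkerPlanckAt r (fun y τ => Real.exp (-r * τ) *
      (fN x0 τ y - ∫ z : ℝ, fN 0 τ (y - z) * fL z)) x t := by
    simpa only [hfN_kernel, sub_zero, zero_add] using
      ((solvesFokkerPlanckAt_heatKernel_sub ht x0 x).sub
        (solvesFokkerPlanckAt_integral_heatKernel hfL_int ht x)).exp_neg_mul r
  have hsol : SolvesFokkerPlanckAt r p x t := by
    simpa only [← hp] using hlaplace.add htransient
  exact hsol.exists_hasDerivAt
end

section
/- Let r : [0,∞) → [0,∞) be continuous, R(t) = ∫_0^t r(ω) dω, t > 0 and s ∈ ℝ. Define f(x,t) = e^{−R(t)}·f_{N(0,t)}(x) + e^{−R(t)}·∫_0^t r(ω)·e^{R(ω)}·f_{N(0,t−ω)}(x) dω, where f_{N(0,u)}(x) = (2πu)^{−1/2}·e^{−x²/(2u)}. Then ∫_ℝ f(x,t)·e^{i s x} dx = e^{−R(t) − t s²/2}·( 1 + ∫_0^t r(w)·e^{R(w) + w s²/2} dw ). -/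
open MeasureTheory

/-!
A Gaussian of mean `m` and variance `v` has Fourier transform `exp (i s m - v s² / 2)`, and Fubini's
theorem carries this formula over to mixtures of Gaussians with an integrable weight. The second
term of the density is such a mixture with variances `t - ω`, so its transform is
`∫ r(ω) exp (R(ω)) exp (-(t - ω) s² / 2) dω`, from which `exp (-t s² / 2)` factors out.
-/

section GaussianMixture

open ProbabilityTheory
open scoped NNReal

theorem gaussianPDFReal_toNNReal (m u x : ℝ) :
    gaussianPDFReal m u.toNNReal x =
      1 / Real.sqrt (2 * Real.pi * u) * Real.exp (-(x - m) ^ 2 / (2 * u)) := by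
  rcases le_total 0 u with hu | hu
  · rw [gaussianPDFReal, Real.coe_toNNReal u hu, one_div]
  · -- Both sides vanish because `√(2πu) = 0` and `1 / 0 = 0`.
    have sqrt_eq_zero : Real.sqrt (2 * Real.pi * u) = 0 :=
      Real.sqrt_eq_zero_of_nonpos (mul_nonpos_of_nonneg_of_nonpos (by positivity) hu)
    simp [Real.toNNReal_of_nonpos hu, sqrt_eq_zero]

theorem integral_norm_gaussianPDFReal_le_one (m : ℝ) (v : ℝ≥0) :
    ∫ x, ‖gaussianPDFReal m v x‖ ≤ 1 := by
  simp only [Real.norm_of_nonneg (gaussianPDFReal_nonneg m v _)]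
  rcases eq_or_ne v 0 with rfl | hv
  · simp
  · exact (integral_gaussianPDFReal_eq_one m hv).le

theorem integral_gaussianPDFReal_mul_cexp (m s : ℝ) {v : ℝ≥0} (hv : v ≠ 0) :
    ∫ x : ℝ, (gaussianPDFReal m v x : ℂ) * Complex.exp (Complex.I * s * x) =
      Complex.exp (s * m * Complex.I - v * s ^ 2 / 2) := by
  rw [← charFun_gaussianReal, charFun_apply_real, integral_gaussianReal_eq_integral_smul hv]
  simp only [Complex.real_smul, mul_comm Complex.I, mul_right_comm _ Complex.I]

variable {α β : Type*} [MeasurableSpace α] [MeasurableSpace β] {μ : Measure α} {ν : Measure β}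

theorem integrable_mul_cexp_I_mul {f : α → ℂ} {X : α → ℝ} (hf : Integrable f μ)
    (hX : AEMeasurable X μ) (s : ℝ) :
    Integrable (fun a ↦ f a * Complex.exp (Complex.I * s * X a)) μ := by
  refine hf.mul_bdd (c := 1) (by fun_prop) (.of_forall fun a ↦ ?_)
  rw [mul_assoc, ← Complex.ofReal_mul, Complex.norm_exp_I_mul_ofReal]

theorem integral_ofReal_add_mul_cexp_I_mul {p q X : α → ℝ} (hp : Integrable p μ)
    (hq : Integrable q μ) (hX : AEMeasurable X μ) (s : ℝ) :
    ∫ a, ((p a + q a : ℝ) : ℂ) * Complex.exp (Complex.I * s * X a) ∂μ =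
      ∫ a, (p a : ℂ) * Complex.exp (Complex.I * s * X a) ∂μ +
        ∫ a, (q a : ℂ) * Complex.exp (Complex.I * s * X a) ∂μ := by
  simp only [Complex.ofReal_add, add_mul]
  exact integral_add (integrable_mul_cexp_I_mul hp.ofReal hX s)
    (integrable_mul_cexp_I_mul hq.ofReal hX s)

theorem integrable_prod_smul_of_integral_norm_le {𝕜 E : Type*} [NormedField 𝕜]
    [NormedAddCommGroup E] [NormedSpace 𝕜 E] [SFinite ν] {g : α → 𝕜} {k : α → β → E} {C : ℝ}
    (hg : Integrable g μ) (hk : AEStronglyMeasurable (Function.uncurry k) (μ.prod ν))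
    (hk_int : ∀ᵐ a ∂μ, Integrable (k a) ν) (hk_le : ∀ᵐ a ∂μ, ∫ b, ‖k a b‖ ∂ν ≤ C) :
    Integrable (fun p : α × β ↦ g p.1 • k p.1 p.2) (μ.prod ν) := by
  have hmeas : AEStronglyMeasurable (fun p : α × β ↦ g p.1 • k p.1 p.2) (μ.prod ν) :=
    hg.aestronglyMeasurable.comp_fst.smul hk
  refine (integrable_prod_iff hmeas).2 ⟨?_, ?_⟩
  · filter_upwards [hk_int] with a ha using ha.smul (g a)
  · refine (hg.norm.mul_const C).mono' hmeas.norm.integral_prod_right' ?_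
    filter_upwards [hk_le] with a ha
    simp only [norm_smul, integral_const_mul, norm_mul, norm_norm]
    rw [Real.norm_of_nonneg (integral_nonneg fun _ ↦ norm_nonneg _)]
    gcongr

/-- The mixture of the Gaussian densities of mean `m a` and variance `v a` with weight `g a` against
`μ`. The weight may change sign and need not have total mass one, and indices with `v a = 0`
contribute nothing, since `gaussianPDFReal` vanishes there. -/
noncomputable def gaussianMixture (μ : Measure α) (g m : α → ℝ) (v : α → ℝ≥0) (x : ℝ) : ℝ :=
  ∫ a, g a * gaussianPDFReal (m a) (v a) x ∂μ

variable {g m : α → ℝ} {v : α → ℝ≥0}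

theorem integrable_prod_mul_gaussianPDFReal (hg : Integrable g μ) (hm : AEMeasurable m μ)
    (hv : AEMeasurable v μ) :
    Integrable (fun p : α × ℝ ↦ g p.1 * gaussianPDFReal (m p.1) (v p.1) p.2)
      (μ.prod volume) := by
  refine integrable_prod_smul_of_integral_norm_le (k := fun a ↦ gaussianPDFReal (m a) (v a)) hg ?_
    (.of_forall fun a ↦ integrable_gaussianPDFReal (m a) (v a))
    (.of_forall fun a ↦ integral_norm_gaussianPDFReal_le_one (m a) (v a))
  exact (measurable_uncurry_gaussianPDFReal.comp_aemeasurable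
    (hm.comp_fst.prodMk (hv.comp_fst.prodMk measurable_snd.aemeasurable))).aestronglyMeasurable

theorem integrable_gaussianMixture [SFinite μ] (hg : Integrable g μ) (hm : AEMeasurable m μ)
    (hv : AEMeasurable v μ) : Integrable (gaussianMixture μ g m v) :=
  (integrable_prod_mul_gaussianPDFReal hg hm hv).integral_prod_right

theorem integral_gaussianMixture_mul_cexp [SFinite μ] (hg : Integrable g μ)
    (hm : AEMeasurable m μ) (hv : AEMeasurable v μ) (hv_ne : ∀ᵐ a ∂μ, v a ≠ 0) (s : ℝ) :
    ∫ x : ℝ, (gaussianMixture μ g m v x : ℂ) * Complex.exp (Complex.I * s * x) =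
      ∫ a, (g a : ℂ) * Complex.exp (s * m a * Complex.I - v a * s ^ 2 / 2) ∂μ := by
  have hint : Integrable (fun p : α × ℝ ↦ ((g p.1 * gaussianPDFReal (m p.1) (v p.1) p.2 : ℝ) : ℂ) *
      Complex.exp (Complex.I * s * p.2)) (μ.prod volume) :=
    integrable_mul_cexp_I_mul (integrable_prod_mul_gaussianPDFReal hg hm hv).ofReal
      measurable_snd.aemeasurable s
  calc
    _ = ∫ x : ℝ, ∫ a, ((g a * gaussianPDFReal (m a) (v a) x : ℝ) : ℂ) *
        Complex.exp (Complex.I * s * x) ∂μ := by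
      simp only [gaussianMixture, integral_mul_const, integral_complex_ofReal]
    _ = ∫ a, (∫ x : ℝ, ((g a * gaussianPDFReal (m a) (v a) x : ℝ) : ℂ) *
        Complex.exp (Complex.I * s * x)) ∂μ := (integral_integral_swap hint).symm
    _ = _ := by
      refine integral_congr_ae ?_
      filter_upwards [hv_ne] with a ha
      simp only [Complex.ofReal_mul, mul_assoc (g a : ℂ), integral_const_mul]
      rw [integral_gaussianPDFReal_mul_cexp (m a) s ha]

end GaussianMixture

section Resetting

open ProbabilityTheory

theorem ae_restrict_Ioc_toNNReal_sub_ne_zero (a t : ℝ) :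
    ∀ᵐ ω ∂volume.restrict (Set.Ioc a t), (t - ω).toNNReal ≠ 0 := by
  filter_upwards [ae_restrict_of_ae (Measure.ae_ne volume t), ae_restrict_mem measurableSet_Ioc]
    with ω hne hmem
  exact (Real.toNNReal_pos.2 (sub_pos.2 (lt_of_le_of_ne hmem.2 hne))).ne'

theorem intervalIntegrable_mul_exp_primitive {r : ℝ → ℝ} {a b : ℝ}
    (hr : IntervalIntegrable r volume a b) :
    IntervalIntegrable (fun ω ↦ r ω * Real.exp (∫ y in a..ω, r y)) volume a b :=
  hr.mul_continuousOn
    (intervalIntegral.continuousOn_primitive_interval' hr Set.left_mem_uIcc).rexp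

/-- The mixture over `ω ∈ (0, t]`, with weight `g`, of the centered Gaussian densities of variance
`t - ω`. For the weight `r ω * exp (R ω)` it is, up to the factor `exp (-R t)`, the contribution to
the resetting density of the paths reset before time `t`, where `ω` is the time of the last reset.
-/
noncomputable def lastResetMixture (g : ℝ → ℝ) (t : ℝ) : ℝ → ℝ :=
  gaussianMixture (volume.restrict (Set.Ioc 0 t)) g (fun _ ↦ 0) fun ω ↦ (t - ω).toNNReal

variable {g : ℝ → ℝ} {t : ℝ}

theorem lastResetMixture_apply (g : ℝ → ℝ) (ht : 0 ≤ t) (x : ℝ) :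
    lastResetMixture g t x =
      ∫ ω in (0 : ℝ)..t, g ω * gaussianPDFReal 0 (t - ω).toNNReal x :=
  (intervalIntegral.integral_of_le ht).symm

theorem integrable_lastResetMixture (hg : IntegrableOn g (Set.Ioc 0 t)) :
    Integrable (lastResetMixture g t) :=
  integrable_gaussianMixture hg aemeasurable_const (by fun_prop)

theorem integral_lastResetMixture_mul_cexp (hg : IntegrableOn g (Set.Ioc 0 t)) (ht : 0 ≤ t)
    (s : ℝ) :
    ∫ x : ℝ, (lastResetMixture g t x : ℂ) * Complex.exp (Complex.I * s * x) =
      ((Real.exp (-(t * s ^ 2 / 2)) *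
        ∫ ω in (0 : ℝ)..t, g ω * Real.exp (ω * s ^ 2 / 2) : ℝ) : ℂ) := by
  rw [lastResetMixture, integral_gaussianMixture_mul_cexp hg aemeasurable_const (by fun_prop)
      (ae_restrict_Ioc_toNNReal_sub_ne_zero 0 t) s,
    intervalIntegral.integral_of_le ht, ← integral_const_mul, ← integral_complex_ofReal]
  refine setIntegral_congr_fun measurableSet_Ioc fun ω hω ↦ ?_
  have hexp : Real.exp (-((t - ω) * s ^ 2 / 2)) =
      Real.exp (-(t * s ^ 2 / 2)) * Real.exp (ω * s ^ 2 / 2) := by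
    rw [← Real.exp_add]
    ring_nf
  calc
    _ = (g ω : ℂ) * (Real.exp (-((t - ω) * s ^ 2 / 2)) : ℂ) := by
      rw [Real.coe_toNNReal _ (sub_nonneg.2 hω.2)]
      simp
    _ = _ := by
      rw [hexp]
      push_cast
      ring

end Resetting

open ProbabilityTheory in
theorem fourier_nonhom_resetting_pdf_general (r : ℝ → ℝ) (t s : ℝ)
    (hr : IntervalIntegrable r volume 0 t) (ht : 0 < t)
    (R : ℝ → ℝ) (fN : ℝ → ℝ → ℝ) (f : ℝ → ℝ → ℝ)
    (hR : ∀ u, R u = ∫ ω in (0 : ℝ)..u, r ω)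
    (hfN : ∀ u x, fN u x = 1 / Real.sqrt (2 * Real.pi * u) * Real.exp (-x ^ 2 / (2 * u)))
    (hf : ∀ x u, f x u = Real.exp (-R u) * fN u x +
      Real.exp (-R u) * ∫ ω in (0 : ℝ)..u, r ω * Real.exp (R ω) * fN (u - ω) x) :
    (∫ x : ℝ, ((f x t : ℝ) : ℂ) * Complex.exp (Complex.I * (s : ℂ) * (x : ℂ))) =
      ((Real.exp (-R t - t * s ^ 2 / 2) *
        (1 + ∫ w in (0 : ℝ)..t, r w * Real.exp (R w + w * s ^ 2 / 2)) : ℝ) : ℂ) := by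
  have fN_eq : ∀ u x, fN u x = gaussianPDFReal 0 u.toNNReal x := fun u x ↦ by
    rw [hfN, gaussianPDFReal_toNNReal, sub_zero]
  have weight_integrable : IntegrableOn (fun ω ↦ r ω * Real.exp (R ω)) (Set.Ioc 0 t) := by
    simpa only [hR, intervalIntegrable_iff_integrableOn_Ioc_of_le ht.le] using
      intervalIntegrable_mul_exp_primitive hr
  have integrand_eq : ∀ x : ℝ, (f x t : ℂ) * Complex.exp (Complex.I * s * x) =
      Real.exp (-R t) * (((gaussianPDFReal 0 t.toNNReal x +
        lastResetMixture (fun ω ↦ r ω * Real.exp (R ω)) t x : ℝ) : ℂ) *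
          Complex.exp (Complex.I * s * x)) := fun x ↦ by
    rw [hf, lastResetMixture_apply _ ht.le, ← mul_add, Complex.ofReal_mul, mul_assoc]
    simp only [fN_eq]
  simp only [integrand_eq, integral_const_mul]
  rw [integral_ofReal_add_mul_cexp_I_mul (X := fun x ↦ x) (integrable_gaussianPDFReal 0 _)
      (integrable_lastResetMixture weight_integrable) aemeasurable_id,
    integral_gaussianPDFReal_mul_cexp 0 s (Real.toNNReal_pos.2 ht).ne',
    integral_lastResetMixture_mul_cexp weight_integrable ht.le, Real.coe_toNNReal t ht.le]
  simp only [Real.exp_add, sub_eq_add_neg, ← mul_assoc]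
  push_cast
  simp only [mul_zero, zero_mul, zero_add]
  ring

/-- The explicit density
`f(x,t) = e^{-R(t)}·f_{N(0,t)}(x) + e^{-R(t)}·∫₀ᵗ r(ω)e^{R(ω)} f_{N(0,t-ω)}(x) dω`
of Brownian motion under non-homogeneous Poissonian resetting to `0` has
Fourier transform `e^{-R(t) - t·s²/2}·(1 + ∫₀ᵗ r(w)·e^{R(w) + w·s²/2} dw)`. -/
theorem fourier_nonhom_resetting_pdf (r : ℝ → ℝ)
    (hrc : ContinuousOn r (Set.Ici (0 : ℝ)))
    (hrnn : ∀ u ∈ Set.Ici (0 : ℝ), 0 ≤ r u)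
    (t s : ℝ) (ht : 0 < t)
    (R : ℝ → ℝ) (fN : ℝ → ℝ → ℝ) (f : ℝ → ℝ → ℝ)
    (hR : ∀ u, R u = ∫ ω in (0 : ℝ)..u, r ω)
    (hfN : ∀ u x, fN u x = 1 / Real.sqrt (2 * Real.pi * u) * Real.exp (-x ^ 2 / (2 * u)))
    (hf : ∀ x u, f x u = Real.exp (-R u) * fN u x +
      Real.exp (-R u) * ∫ ω in (0 : ℝ)..u, r ω * Real.exp (R ω) * fN (u - ω) x) :
    (∫ x : ℝ, ((f x t : ℝ) : ℂ) * Complex.exp (Complex.I * (s : ℂ) * (x : ℂ))) =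
      ((Real.exp (-R t - t * s ^ 2 / 2) *
        (1 + ∫ w in (0 : ℝ)..t, r w * Real.exp (R w + w * s ^ 2 / 2)) : ℝ) : ℂ) :=
  fourier_nonhom_resetting_pdf_general r t s
    (hrc.mono (Set.uIcc_of_le ht.le ▸ Set.Icc_subset_Ici_self)).intervalIntegrable
    ht R fN f hR hfN hf
end

section
/- Let r : [0,∞) → [0,∞) be continuous, R(t) = ∫_0^t r(ω) dω, and t > 0. Define f(x,t) = e^{−R(t)}·f_{N(0,t)}(x) + e^{−R(t)}·∫_0^t r(ω)·e^{R(ω)}·f_{N(0,t−ω)}(x) dω, where f_{N(0,u)}(x) = (2πu)^{−1/2}·e^{−x²/(2u)}. Then the mean squared displacement satisfies ∫_ℝ x²·f(x,t) dx = e^{−R(t)}·∫_0^t e^{R(ω)} dω. -/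
open MeasureTheory

/-!
The direct term of the density contributes the Gaussian second moment `t`. By Fubini, the mixture
of the Gaussians `N(0, t - ω)` with weights `r(ω) e^{R(ω)}` contributes
`∫₀ᵗ r(ω) e^{R(ω)} (t - ω) dω`. Since `r e^R` is almost everywhere the derivative of the absolutely
continuous function `e^R`, integration by parts turns this into `∫₀ᵗ e^{R(ω)} dω - t`, and the two
occurrences of `t` cancel.
-/

open ProbabilityTheory Set
open scoped NNReal

section AbsolutelyContinuous

variable {a b : ℝ}

lemma absolutelyContinuousOnInterval_comp_of_locallyLipschitz {E X : Type*}
    [SeminormedAddCommGroup E] [PseudoMetricSpace X] {φ : E → X} {f : ℝ → E}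
    (hφ : LocallyLipschitz φ) (hf : AbsolutelyContinuousOnInterval f a b) :
    AbsolutelyContinuousOnInterval (φ ∘ f) a b := by
  obtain ⟨K, hK⟩ : ∃ K, LipschitzOnWith K φ (f '' uIcc a b) :=
    hφ.locallyLipschitzOn.exists_lipschitzOnWith_of_compact
      (isCompact_uIcc.image_of_continuousOn hf.continuousOn)
  unfold AbsolutelyContinuousOnInterval at hf ⊢
  have hKf := hf.const_mul (K : ℝ)
  rw [mul_zero] at hKf
  refine squeeze_zero' (.of_forall fun I ↦ Finset.sum_nonneg fun i _ ↦ dist_nonneg) ?_ hKf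
  rw [Filter.eventually_inf_principal]
  filter_upwards with I hI
  rw [Finset.mul_sum]
  gcongr with i hi
  obtain ⟨hleft, hright⟩ := hI.1 i hi
  exact hK.dist_le_mul _ (mem_image_of_mem f hleft) _ (mem_image_of_mem f hright)

lemma integral_sub_mul_deriv_eq_integral_sub {G : ℝ → ℝ}
    (hG : AbsolutelyContinuousOnInterval G a b) :
    ∫ ω in a..b, (b - ω) * deriv G ω = (∫ ω in a..b, G ω) - (b - a) * G a := by
  have hsub : AbsolutelyContinuousOnInterval (fun ω ↦ b - ω) a b :=
    ((LipschitzWith.const b).sub LipschitzWith.id).lipschitzOnWith.absolutelyContinuousOnInterval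
  have hderiv (ω : ℝ) : deriv (fun ω ↦ b - ω) ω = -1 := by simp
  rw [hsub.integral_mul_deriv_eq_deriv_mul hG]
  simp only [hderiv, neg_one_mul, intervalIntegral.integral_neg]
  ring

variable {r : ℝ → ℝ}

lemma absolutelyContinuousOnInterval_exp_integral (hr : IntervalIntegrable r volume a b) :
    AbsolutelyContinuousOnInterval (fun u ↦ Real.exp (∫ ω in a..u, r ω)) a b :=
  absolutelyContinuousOnInterval_comp_of_locallyLipschitz (φ := Real.exp)
    Real.contDiff_exp.locallyLipschitz
    (hr.absolutelyContinuousOnInterval_intervalIntegral left_mem_uIcc)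

lemma intervalIntegrable_mul_exp_integral (hr : IntervalIntegrable r volume a b) :
    IntervalIntegrable (fun u ↦ r u * Real.exp (∫ ω in a..u, r ω)) volume a b :=
  hr.mul_continuousOn (absolutelyContinuousOnInterval_exp_integral hr).continuousOn

lemma integral_mul_exp_integral_mul_sub (hr : IntervalIntegrable r volume a b) :
    ∫ u in a..b, r u * Real.exp (∫ ω in a..u, r ω) * (b - u) =
      (∫ u in a..b, Real.exp (∫ ω in a..u, r ω)) - (b - a) := by
  have hderiv : ∀ᵐ u, u ∈ uIoc a b →
      r u * Real.exp (∫ ω in a..u, r ω) * (b - u) =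
        (b - u) * deriv (fun u ↦ Real.exp (∫ ω in a..u, r ω)) u := by
    filter_upwards [hr.ae_hasDerivAt_integral] with u hu huab
    rw [(hu (uIoc_subset_uIcc huab) a left_mem_uIcc).exp.deriv]
    ring
  rw [intervalIntegral.integral_congr_ae hderiv,
    integral_sub_mul_deriv_eq_integral_sub (absolutelyContinuousOnInterval_exp_integral hr)]
  simp

end AbsolutelyContinuous

section Mixture

variable {α β : Type*} [MeasurableSpace α] [MeasurableSpace β] {μ : Measure α} {ν : Measure β}
  {g : β → ℝ}

lemma integrable_prod_mul_of_nonneg [SFinite μ] [SFinite ν] {k : β → α → ℝ}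
    (hg : AEStronglyMeasurable g ν)
    (hk : AEStronglyMeasurable (Function.uncurry k) (ν.prod μ))
    (hk_nonneg : ∀ᵐ b ∂ν, 0 ≤ᵐ[μ] k b) (hk_int : ∀ᵐ b ∂ν, Integrable (k b) μ)
    (hgk : Integrable (fun b ↦ g b * ∫ x, k b x ∂μ) ν) :
    Integrable (fun p : β × α ↦ g p.1 * k p.1 p.2) (ν.prod μ) := by
  refine (integrable_prod_iff (hg.comp_fst.mul hk)).2
    ⟨hk_int.mono fun b hb ↦ hb.const_mul (g b), hgk.norm.congr ?_⟩
  filter_upwards [hk_nonneg] with b hb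
  have hnorm : (fun x ↦ ‖g b * k b x‖) =ᵐ[μ] fun x ↦ ‖g b‖ * k b x := by
    filter_upwards [hb] with x hx
    rw [norm_mul, Real.norm_of_nonneg hx]
  calc ‖g b * ∫ x, k b x ∂μ‖
      = ‖g b‖ * ∫ x, k b x ∂μ := by
        rw [norm_mul, Real.norm_of_nonneg (integral_nonneg_of_ae hb)]
    _ = ∫ x, ‖g b * k b x‖ ∂μ := by rw [integral_congr_ae hnorm, integral_const_mul]

variable (m : ℝ) (w : ℝ≥0) {v : β → ℝ≥0}

lemma integral_sq_sub_mul_gaussianPDFReal :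
    ∫ x, (x - m) ^ 2 * gaussianPDFReal m w x = w := by
  rcases eq_or_ne w 0 with rfl | hw
  · simp
  calc ∫ x, (x - m) ^ 2 * gaussianPDFReal m w x
      = ∫ x, (x - m) ^ 2 ∂gaussianReal m w := by
        simp only [integral_gaussianReal_eq_integral_smul hw, smul_eq_mul, mul_comm]
    _ = Var[fun x ↦ x; gaussianReal m w] := by
        rw [variance_eq_integral measurable_id'.aemeasurable, integral_id_gaussianReal]
    _ = w := variance_fun_id_gaussianReal

lemma integrable_sq_sub_mul_gaussianPDFReal :
    Integrable fun x ↦ (x - m) ^ 2 * gaussianPDFReal m w x := by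
  rcases eq_or_ne w 0 with rfl | hw
  · simp
  refine .of_integral_ne_zero ?_
  rw [integral_sq_sub_mul_gaussianPDFReal]
  exact_mod_cast hw

lemma sq_sub_mul_integral_mul_gaussianPDFReal (x : ℝ) :
    (x - m) ^ 2 * ∫ b, g b * gaussianPDFReal m (v b) x ∂ν =
      ∫ b, g b * ((x - m) ^ 2 * gaussianPDFReal m (v b) x) ∂ν := by
  simp only [← integral_const_mul, mul_left_comm]

variable [SFinite ν]

lemma integrable_prod_mul_sq_sub_mul_gaussianPDFReal (hg : AEStronglyMeasurable g ν)
    (hv : Measurable v) (hgv : Integrable (fun b ↦ g b * v b) ν) :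
    Integrable (fun p : β × ℝ ↦ g p.1 * ((p.2 - m) ^ 2 * gaussianPDFReal m (v p.1) p.2))
      (ν.prod volume) := by
  refine integrable_prod_mul_of_nonneg hg (Measurable.aestronglyMeasurable ?_)
    (.of_forall fun b ↦ .of_forall fun x ↦
      mul_nonneg (sq_nonneg _) (gaussianPDFReal_nonneg _ _ _))
    (.of_forall fun b ↦ integrable_sq_sub_mul_gaussianPDFReal m (v b)) ?_
  · unfold Function.uncurry gaussianPDFReal
    fun_prop
  · simpa only [integral_sq_sub_mul_gaussianPDFReal] using hgv

lemma integrable_sq_sub_mul_gaussian_mixture (hg : AEStronglyMeasurable g ν)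
    (hv : Measurable v) (hgv : Integrable (fun b ↦ g b * v b) ν) :
    Integrable fun x ↦ (x - m) ^ 2 * ∫ b, g b * gaussianPDFReal m (v b) x ∂ν := by
  simp only [sq_sub_mul_integral_mul_gaussianPDFReal]
  exact (integrable_prod_mul_sq_sub_mul_gaussianPDFReal m hg hv hgv).integral_prod_right

lemma integral_sq_sub_mul_gaussian_mixture (hg : AEStronglyMeasurable g ν)
    (hv : Measurable v) (hgv : Integrable (fun b ↦ g b * v b) ν) :
    ∫ x, (x - m) ^ 2 * ∫ b, g b * gaussianPDFReal m (v b) x ∂ν = ∫ b, g b * v b ∂ν := by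
  simp only [sq_sub_mul_integral_mul_gaussianPDFReal]
  rw [← integral_integral_swap (integrable_prod_mul_sq_sub_mul_gaussianPDFReal m hg hv hgv)]
  simp only [integral_const_mul, integral_sq_sub_mul_gaussianPDFReal]

end Mixture

-- For `u ≤ 0` both sides are `0`: on the left `√(2πu) = 0` and `1 / 0 = 0`, on the right the
-- variance is `0`, for which `gaussianPDFReal` vanishes.
lemma one_div_sqrt_mul_exp_eq_gaussianPDFReal (u x : ℝ) :
    1 / √(2 * Real.pi * u) * Real.exp (-x ^ 2 / (2 * u)) = gaussianPDFReal 0 u.toNNReal x := by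
  rcases le_total 0 u with hu | hu
  · simp [gaussianPDFReal, hu]
  · have hsqrt : √(2 * Real.pi * u) = 0 :=
      Real.sqrt_eq_zero_of_nonpos (mul_nonpos_of_nonneg_of_nonpos (by positivity) hu)
    simp [hsqrt, Real.toNNReal_of_nonpos hu]

lemma integral_sq_sub_mul_gaussian_add_intervalMixture {g : ℝ → ℝ} {a b : ℝ} (m : ℝ) (hab : a ≤ b)
    (hg : IntervalIntegrable g volume a b) :
    ∫ x, (x - m) ^ 2 * (gaussianPDFReal m (b - a).toNNReal x +
        ∫ ω in a..b, g ω * gaussianPDFReal m (b - ω).toNNReal x) =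
      (b - a) + ∫ ω in a..b, g ω * (b - ω) := by
  have hgv : IntervalIntegrable (fun ω ↦ g ω * (b - ω).toNNReal) volume a b :=
    hg.mul_continuousOn (by fun_prop)
  rw [intervalIntegrable_iff_integrableOn_Ioc_of_le hab] at hg hgv
  have hv : Measurable fun ω : ℝ ↦ (b - ω).toNNReal := by fun_prop
  simp only [mul_add, intervalIntegral.integral_of_le hab]
  rw [integral_add (integrable_sq_sub_mul_gaussianPDFReal m _)
      (integrable_sq_sub_mul_gaussian_mixture m hg.aestronglyMeasurable hv hgv),
    integral_sq_sub_mul_gaussianPDFReal,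
    integral_sq_sub_mul_gaussian_mixture m hg.aestronglyMeasurable hv hgv,
    Real.coe_toNNReal _ (sub_nonneg.2 hab)]
  congr 1
  refine setIntegral_congr_fun measurableSet_Ioc fun ω hω ↦ ?_
  simp only [Real.coe_toNNReal _ (sub_nonneg.2 hω.2)]

theorem msd_nonhom_resetting_general (r : ℝ → ℝ) (t : ℝ) (ht : 0 < t)
    (hr : IntervalIntegrable r volume 0 t)
    (R : ℝ → ℝ) (fN : ℝ → ℝ → ℝ) (f : ℝ → ℝ → ℝ)
    (hR : ∀ u, R u = ∫ ω in (0 : ℝ)..u, r ω)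
    (hfN : ∀ u x, fN u x = 1 / Real.sqrt (2 * Real.pi * u) * Real.exp (-x ^ 2 / (2 * u)))
    (hf : ∀ x u, f x u = Real.exp (-R u) * fN u x +
      Real.exp (-R u) * ∫ ω in (0 : ℝ)..u, r ω * Real.exp (R ω) * fN (u - ω) x) :
    (∫ x : ℝ, x ^ 2 * f x t) = Real.exp (-R t) * ∫ ω in (0 : ℝ)..t, Real.exp (R ω) := by
  have hfN_gaussian (u x : ℝ) : fN u x = gaussianPDFReal 0 u.toNNReal x := by
    rw [hfN, one_div_sqrt_mul_exp_eq_gaussianPDFReal]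
  have hweight : IntervalIntegrable (fun ω ↦ r ω * Real.exp (R ω)) volume 0 t := by
    simpa only [hR] using intervalIntegrable_mul_exp_integral hr
  calc ∫ x, x ^ 2 * f x t
      = Real.exp (-R t) * ∫ x, (x - 0) ^ 2 * (gaussianPDFReal 0 (t - 0).toNNReal x +
          ∫ ω in (0 : ℝ)..t, r ω * Real.exp (R ω) * gaussianPDFReal 0 (t - ω).toNNReal x) := by
        simp only [hf, hfN_gaussian, sub_zero, ← mul_add, mul_left_comm, ← integral_const_mul]
    _ = Real.exp (-R t) * ((t - 0) + ∫ ω in (0 : ℝ)..t, r ω * Real.exp (R ω) * (t - ω)) := by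
        rw [integral_sq_sub_mul_gaussian_add_intervalMixture 0 ht.le hweight]
    _ = Real.exp (-R t) * ∫ ω in (0 : ℝ)..t, Real.exp (R ω) := by
        simp only [hR, integral_mul_exp_integral_mul_sub hr, add_sub_cancel]

/-- The mean squared displacement of Brownian motion under non-homogeneous
Poissonian resetting to `0` with intensity `r(t) ≥ 0` and `R(t) = ∫₀ᵗ r`:
`∫ x² f(x,t) dx = e^{-R(t)}·∫₀ᵗ e^{R(ω)} dω`. -/
theorem msd_nonhom_resetting (r : ℝ → ℝ)
    (hrc : ContinuousOn r (Set.Ici (0 : ℝ)))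
    (hrnn : ∀ u ∈ Set.Ici (0 : ℝ), 0 ≤ r u)
    (t : ℝ) (ht : 0 < t)
    (R : ℝ → ℝ) (fN : ℝ → ℝ → ℝ) (f : ℝ → ℝ → ℝ)
    (hR : ∀ u, R u = ∫ ω in (0 : ℝ)..u, r ω)
    (hfN : ∀ u x, fN u x = 1 / Real.sqrt (2 * Real.pi * u) * Real.exp (-x ^ 2 / (2 * u)))
    (hf : ∀ x u, f x u = Real.exp (-R u) * fN u x +
      Real.exp (-R u) * ∫ ω in (0 : ℝ)..u, r ω * Real.exp (R ω) * fN (u - ω) x) :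
    (∫ x : ℝ, x ^ 2 * f x t) = Real.exp (-R t) * ∫ ω in (0 : ℝ)..t, Real.exp (R ω) := 
  msd_nonhom_resetting_general r t ht
    ((hrc.mono Icc_subset_Ici_self).intervalIntegrable_of_Icc ht.le) R fN f hR hfN hf
end

section
/- Let r > 0 and consider the intensity function r(t) = r/(t+1) (the case p = −1), so that R(t) = ∫_0^t r(ω) dω = r·ln(t+1). Then for every t ≥ 0, the mean squared displacement MSD(t) = e^{−R(t)}·∫_0^t e^{R(ω)} dω = (1/(t+1)^r)·∫_0^t (ω+1)^r dω equals (t+1)/(r+1) − 1/((t+1)^r·(r+1)). In particular MSD(t)/t → 1/(r+1) as t → ∞, so the process is asymptotically diffusive. -/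
open MeasureTheory Filter

/-!
Since `exp (r * log (ω + 1)) = (ω + 1) ^ r`, the integral is elementary and the mean squared
displacement factors as `(t + 1) / (r + 1) * (1 - (t + 1) ^ (-(r + 1)))`. For `r > -1` the last
factor tends to `1`, which leaves linear growth of slope `1 / (r + 1)`.
-/

/-- The mean squared displacement at time `t` of Brownian motion started at `0` and reset to `0`
with cumulative intensity `R`, i.e. `R t` is the integral of the resetting intensity over `[0, t]`.
It is given by its integral formula, with no underlying process. -/
noncomputable def resettingMSD (R : ℝ → ℝ) (t : ℝ) : ℝ :=
  Real.exp (-R t) * ∫ ω in (0 : ℝ)..t, Real.exp (R ω)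

theorem resettingMSD_eq_of_exp_eq {R g : ℝ → ℝ} {t : ℝ}
    (hg : ∀ ω ∈ Set.uIcc 0 t, Real.exp (R ω) = g ω) :
    resettingMSD R t = 1 / g t * ∫ ω in (0 : ℝ)..t, g ω := by
  rw [resettingMSD, Real.exp_neg, hg t Set.right_mem_uIcc, intervalIntegral.integral_congr hg,
    one_div]

theorem integral_add_const_rpow {a b c r : ℝ}
    (h : -1 < r ∨ r ≠ -1 ∧ (0 : ℝ) ∉ Set.uIcc (a + c) (b + c)) :
    ∫ ω in a..b, (ω + c) ^ r = ((b + c) ^ (r + 1) - (a + c) ^ (r + 1)) / (r + 1) := by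
  rw [intervalIntegral.integral_comp_add_right (fun x : ℝ => x ^ r), integral_rpow h]

theorem tendsto_add_const_div_self_atTop (c : ℝ) :
    Tendsto (fun t : ℝ => (t + c) / t) atTop (nhds 1) := by
  have h : Tendsto (fun t : ℝ => 1 + c / t) atTop (nhds (1 + 0)) :=
    (tendsto_const_nhds.div_atTop tendsto_id).const_add 1
  rw [add_zero] at h
  refine h.congr' ?_
  filter_upwards [eventually_ne_atTop 0] with t ht
  rw [add_div, div_self ht]

section LogCumulativeIntensity

variable {r t : ℝ}

theorem resettingMSD_mul_log_add_one (ht : -1 < t) :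
    resettingMSD (fun s => r * Real.log (s + 1)) t =
      1 / (t + 1) ^ r * ∫ ω in (0 : ℝ)..t, (ω + 1) ^ r := by
  refine resettingMSD_eq_of_exp_eq (g := fun ω => (ω + 1) ^ r) fun ω hω => ?_
  have hω_gt : -1 < ω := (lt_min (by norm_num) ht).trans_le hω.1
  rw [Real.rpow_def_of_pos (by linarith), mul_comm]

theorem resettingMSD_mul_log_add_one_eq_mul (hr : r ≠ -1) (ht : -1 < t) :
    resettingMSD (fun s => r * Real.log (s + 1)) t =
      (t + 1) / (r + 1) * (1 - (t + 1) ^ (-(r + 1))) := by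
  have ht_pos : 0 < t + 1 := by linarith
  have h_zero_notMem : (0 : ℝ) ∉ Set.uIcc (0 + 1) (t + 1) :=
    Set.notMem_uIcc_of_lt (by norm_num) ht_pos
  have hr_ne : r + 1 ≠ 0 := fun h => hr (eq_neg_of_add_eq_zero_left h)
  rw [resettingMSD_mul_log_add_one ht, integral_add_const_rpow (Or.inr ⟨hr, h_zero_notMem⟩),
    zero_add, Real.one_rpow, Real.rpow_neg ht_pos.le, Real.rpow_add_one ht_pos.ne']
  field_simp

theorem resettingMSD_mul_log_add_one_eq_sub (hr : r ≠ -1) (ht : -1 < t) :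
    resettingMSD (fun s => r * Real.log (s + 1)) t =
      (t + 1) / (r + 1) - 1 / ((t + 1) ^ r * (r + 1)) := by
  have ht_pos : 0 < t + 1 := by linarith
  rw [resettingMSD_mul_log_add_one_eq_mul hr ht, Real.rpow_neg ht_pos.le,
    Real.rpow_add_one ht_pos.ne']
  field_simp

theorem tendsto_resettingMSD_mul_log_add_one_div_self (hr : -1 < r) :
    Tendsto (fun t => resettingMSD (fun s => r * Real.log (s + 1)) t / t) atTop
      (nhds (1 / (r + 1))) := by
  have h_decay : Tendsto (fun t : ℝ => (t + 1) ^ (-(r + 1))) atTop (nhds 0) :=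
    (tendsto_rpow_neg_atTop (by linarith)).comp
      (tendsto_atTop_add_const_right atTop 1 tendsto_id)
  have h_prod : Tendsto
      (fun t : ℝ => (t + 1) / t * (1 - (t + 1) ^ (-(r + 1))) / (r + 1)) atTop
      (nhds (1 * (1 - 0) / (r + 1))) :=
    ((tendsto_add_const_div_self_atTop 1).mul (h_decay.const_sub 1)).div_const (r + 1)
  rw [sub_zero, mul_one] at h_prod
  refine h_prod.congr' ?_
  filter_upwards [eventually_gt_atTop (-1)] with t ht
  rw [resettingMSD_mul_log_add_one_eq_mul hr.ne' ht]
  ring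

end LogCumulativeIntensity

theorem msd_power_law_p_neg_one_general (r : ℝ) (hr : -1 < r)
    (R MSD : ℝ → ℝ)
    (hR : ∀ t, R t = r * Real.log (t + 1))
    (hMSD : ∀ t, MSD t = Real.exp (-R t) * ∫ ω in (0 : ℝ)..t, Real.exp (R ω)) :
    (∀ t : ℝ, -1 < t →
        (MSD t = (1 / (t + 1) ^ r) * ∫ ω in (0 : ℝ)..t, (ω + 1) ^ r) ∧
        MSD t = (t + 1) / (r + 1) - 1 / ((t + 1) ^ r * (r + 1))) ∧
      Tendsto (fun t => MSD t / t) atTop (nhds (1 / (r + 1))) := by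
  obtain rfl : R = fun t => r * Real.log (t + 1) := funext hR
  obtain rfl : MSD = resettingMSD fun t => r * Real.log (t + 1) := funext hMSD
  exact ⟨fun t ht => ⟨resettingMSD_mul_log_add_one ht,
    resettingMSD_mul_log_add_one_eq_sub hr.ne' ht⟩,
    tendsto_resettingMSD_mul_log_add_one_div_self hr⟩

/-- For the resetting intensity `r(t) = r/(t+1)` (power-law exponent `p = -1`),
with `R(t) = r·ln(t+1)`, the MSD `e^{-R(t)}·∫₀ᵗ e^{R(ω)} dω` equals
`(t+1)/(r+1) - 1/((t+1)^r·(r+1))`, and `MSD(t)/t → 1/(r+1)` as `t → ∞`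
(asymptotically diffusive behaviour). -/
theorem msd_power_law_p_neg_one (r : ℝ) (hr : 0 < r)
    (R MSD : ℝ → ℝ)
    (hR : ∀ t, R t = r * Real.log (t + 1))
    (hMSD : ∀ t, MSD t = Real.exp (-R t) * ∫ ω in (0 : ℝ)..t, Real.exp (R ω)) :
    (∀ t : ℝ, 0 ≤ t →
        (MSD t = (1 / (t + 1) ^ r) * ∫ ω in (0 : ℝ)..t, (ω + 1) ^ r) ∧
        MSD t = (t + 1) / (r + 1) - 1 / ((t + 1) ^ r * (r + 1))) ∧
      Tendsto (fun t => MSD t / t) atTop (nhds (1 / (r + 1))) :=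
  (msd_power_law_p_neg_one_general r (by linarith) R MSD hR hMSD).imp_left
    fun h t ht => h t (by linarith)
end

section
/- Let r > 0 and p < −1, and set R(t) = (r/(p+1))·((t+1)^{p+1} − 1). Define MSD(t) = e^{−R(t)}·∫_0^t e^{R(ω)} dω. Then lim_{t→∞} MSD(t)/t = 1; i.e., for a power-law resetting intensity decaying faster than 1/t, the process displays normal diffusive scaling of the mean squared displacement at large times. -/
open MeasureTheory Filter

/-!
Because `p < -1`, the mean number of resets `R t` has a finite limit `L`. By the continuous Cesàro
theorem the average of `exp (R ω)` over `[0, t]` then tends to `exp L`, which the prefactor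
`exp (-R t) → exp (-L)` cancels.
-/

open Set Asymptotics Topology

section Cesaro

variable {E : Type*} [NormedAddCommGroup E] {f : ℝ → E} {a : ℝ}

theorem intervalIntegrable_of_locallyIntegrableOn_Ici (hf : LocallyIntegrableOn f (Ici a))
    {b c : ℝ} (hb : a ≤ b) (hc : a ≤ c) : IntervalIntegrable f volume b c :=
  (hf.integrableOn_compact_subset (ordConnected_Ici.uIcc_subset hb hc)
    isCompact_uIcc).intervalIntegrable

variable [NormedSpace ℝ E]

theorem isLittleO_integral_id_of_tendsto_zero (hf : LocallyIntegrableOn f (Ici a))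
    (hlim : Tendsto f atTop (𝓝 0)) :
    (fun t => ∫ x in a..t, f x) =o[atTop] (id : ℝ → ℝ) := by
  refine isLittleO_iff.2 fun ε hε => ?_
  have eventually_small : ∀ᶠ x in atTop, ‖f x‖ ≤ ε / 2 :=
    (tendsto_zero_iff_norm_tendsto_zero.1 hlim).eventually_le_const (half_pos hε)
  obtain ⟨T, hT⟩ := eventually_atTop.1
    (eventually_small.and ((eventually_ge_atTop a).and (eventually_ge_atTop 0)))
  obtain ⟨-, haT, hT0⟩ := hT T le_rfl
  have head_small : ∀ᶠ t : ℝ in atTop, ‖∫ x in a..T, f x‖ ≤ ε / 2 * ‖t‖ :=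
    (isLittleO_const_id_atTop (∫ x in a..T, f x)).bound (half_pos hε)
  filter_upwards [head_small, eventually_ge_atTop T] with t head_le hTt
  have tail_le : ‖∫ x in T..t, f x‖ ≤ ε / 2 * |t - T| :=
    intervalIntegral.norm_integral_le_of_norm_le_const fun x hx =>
      (hT x (uIoc_of_le hTt ▸ hx).1.le).1
  calc ‖∫ x in a..t, f x‖
      = ‖(∫ x in a..T, f x) + ∫ x in T..t, f x‖ := by
        rw [intervalIntegral.integral_add_adjacent_intervals
          (intervalIntegrable_of_locallyIntegrableOn_Ici hf le_rfl haT)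
          (intervalIntegrable_of_locallyIntegrableOn_Ici hf haT (haT.trans hTt))]
    _ ≤ ε / 2 * ‖t‖ + ε / 2 * |t - T| := norm_add_le_of_le head_le tail_le
    _ ≤ ε / 2 * ‖t‖ + ε / 2 * ‖t‖ := by
        gcongr
        rw [Real.norm_eq_abs, abs_of_nonneg (sub_nonneg.2 hTt), abs_of_nonneg (hT0.trans hTt)]
        exact sub_le_self t hT0
    _ = ε * ‖id t‖ := by rw [← add_mul, add_halves, id]

theorem tendsto_inv_smul_integral_of_tendsto [CompleteSpace E] {l : E}
    (hf : LocallyIntegrableOn f (Ici a)) (hlim : Tendsto f atTop (𝓝 l)) :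
    Tendsto (fun t : ℝ => t⁻¹ • ∫ x in a..t, f x) atTop (𝓝 l) := by
  have hconst : LocallyIntegrableOn (fun _ : ℝ => l) (Ici a) :=
    (locallyIntegrable_const l).locallyIntegrableOn _
  have deviation : Tendsto (fun t : ℝ => t⁻¹ • ∫ x in a..t, (f x - l)) atTop (𝓝 0) :=
    (isLittleO_integral_id_of_tendsto_zero (hf.sub hconst)
      (tendsto_sub_nhds_zero_iff.2 hlim)).tendsto_inv_smul_nhds_zero
  have const_average : Tendsto (fun t : ℝ => (1 - t⁻¹ * a) • l) atTop (𝓝 l) := by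
    simpa using ((tendsto_inv_atTop_zero.mul_const a).const_sub 1).smul_const l
  rw [← zero_add l]
  refine (deviation.add const_average).congr' ?_
  filter_upwards [eventually_ge_atTop a, eventually_ne_atTop 0] with t hat ht
  rw [intervalIntegral.integral_sub
      (intervalIntegrable_of_locallyIntegrableOn_Ici hf le_rfl hat) intervalIntegrable_const,
    intervalIntegral.integral_const, smul_sub, smul_smul, mul_sub, inv_mul_cancel₀ ht,
    sub_add_cancel]

end Cesaro

/-- The mean number `R(t) = ∫₀ᵗ r (ω + 1) ^ p dω` of resets up to time `t` for the power-law
intensity, in its closed form for `p ≠ -1`; at `p = -1` division by zero makes it vanish. -/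
noncomputable def powerLawMeanResets (r p t : ℝ) : ℝ :=
  r / (p + 1) * ((t + 1) ^ (p + 1) - 1)

theorem continuousOn_powerLawMeanResets (r p : ℝ) :
    ContinuousOn (powerLawMeanResets r p) (Ici 0) := by
  have hrpow : ContinuousOn (fun t : ℝ => (t + 1) ^ (p + 1)) (Ici 0) :=
    (continuousOn_id.add continuousOn_const).rpow_const fun t ht =>
      .inl (add_pos_of_nonneg_of_pos ht one_pos).ne'
  exact continuousOn_const.mul (hrpow.sub continuousOn_const)

theorem tendsto_powerLawMeanResets_atTop (r : ℝ) {p : ℝ} (hp : p < -1) :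
    Tendsto (powerLawMeanResets r p) atTop (𝓝 (-(r / (p + 1)))) := by
  have hrpow : Tendsto (fun t : ℝ => (t + 1) ^ (p + 1)) atTop (𝓝 0) := by
    have h := tendsto_rpow_neg_atTop (y := -(p + 1)) (by linarith)
    rw [neg_neg] at h
    exact h.comp (tendsto_atTop_add_const_right _ 1 tendsto_id)
  have hlim := (hrpow.sub_const 1).const_mul (r / (p + 1))
  rwa [zero_sub, mul_neg_one] at hlim

theorem msd_power_law_diffusive_general {R MSD : ℝ → ℝ} {L : ℝ}
    (hR : LocallyIntegrableOn (fun t => Real.exp (R t)) (Ici 0))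
    (hlim : Tendsto R atTop (𝓝 L))
    (hMSD : ∀ t, MSD t = Real.exp (-R t) * ∫ ω in (0 : ℝ)..t, Real.exp (R ω)) :
    Tendsto (fun t => MSD t / t) atTop (𝓝 1) := by
  have average : Tendsto (fun t : ℝ => t⁻¹ • ∫ ω in (0 : ℝ)..t, Real.exp (R ω)) atTop
      (𝓝 (Real.exp L)) :=
    tendsto_inv_smul_integral_of_tendsto hR hlim.rexp
  have hprod := hlim.neg.rexp.mul average
  rw [← Real.exp_add, neg_add_cancel, Real.exp_zero] at hprod
  refine hprod.congr fun t => ?_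
  rw [hMSD, smul_eq_mul, div_eq_inv_mul, mul_left_comm]

/-- For power-law resetting intensity `r(t) = r·(t+1)^p` with `p < -1` and
`R(t) = (r/(p+1))·((t+1)^{p+1} - 1)`, the MSD `e^{-R(t)}·∫₀ᵗ e^{R(ω)} dω`
satisfies `MSD(t)/t → 1` as `t → ∞`: normal diffusive scaling. -/
theorem msd_power_law_diffusive (r p : ℝ) (hr : 0 < r) (hp : p < -1)
    (R MSD : ℝ → ℝ)
    (hR : ∀ t, R t = r / (p + 1) * ((t + 1) ^ (p + 1) - 1))
    (hMSD : ∀ t, MSD t = Real.exp (-R t) * ∫ ω in (0 : ℝ)..t, Real.exp (R ω)) :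
    Tendsto (fun t => MSD t / t) atTop (nhds 1) := by
  obtain rfl : R = powerLawMeanResets r p := funext hR
  exact msd_power_law_diffusive_general
    ((continuousOn_powerLawMeanResets r p).rexp.locallyIntegrableOn measurableSet_Ici)
    (tendsto_powerLawMeanResets_atTop r hp) hMSD
end

section
/- Let r > 0 and p > 0, set r(t) = r·(t+1)^p and R(t) = (r/(p+1))·((t+1)^{p+1} − 1), and define φ_t(s) = e^{−R(t) − t s²/2}·( 1 + ∫_0^t r(w)·e^{R(w) + w s²/2} dw ). Then for every s ∈ ℝ, lim_{t→∞} φ_t(s) = 1; i.e., the characteristic function of the resetting process converges pointwise to that of the distribution degenerate at the resetting point 0. -/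
open MeasureTheory Filter

/-!
Put `c = s² / 2` and `G t = R t + c t`, so that `G' = r + c` and
`φ_t(s) = (1 + ∫₀ᵗ r e^G) / e^{G t}`. Since `r → ∞`, the integrand `r e^G` is equivalent to
`G' e^G`. As `∫₀ᵗ G' e^G = e^{G t} - 1` diverges, the integrals are equivalent as well, and
`φ_t(s) → 1`.
-/

open Set Asymptotics Topology

section IntegralAsymptotics

variable {μ : Measure ℝ} {a : ℝ} {g : ℝ → ℝ}

theorem isLittleO_intervalIntegral {E : Type*} [NormedAddCommGroup E] [NormedSpace ℝ E]
    {f : ℝ → E} (hf : ∀ t ≥ a, IntervalIntegrable f μ a t)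
    (hg : ∀ t ≥ a, IntervalIntegrable g μ a t) (hg_nonneg : ∀ᶠ t in atTop, 0 ≤ g t)
    (hg_lim : Tendsto (fun t ↦ ∫ w in a..t, g w ∂μ) atTop atTop) (hfg : f =o[atTop] g) :
    (fun t ↦ ∫ w in a..t, f w ∂μ) =o[atTop] fun t ↦ ∫ w in a..t, g w ∂μ := by
  refine isLittleO_iff.2 fun ε hε ↦ ?_
  have hfg_le : ∀ᶠ t in atTop, ‖f t‖ ≤ ε / 2 * g t := by
    filter_upwards [hfg.bound (half_pos hε), hg_nonneg] with t hle hnonneg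
    rwa [Real.norm_of_nonneg hnonneg] at hle
  obtain ⟨T, haT, hT⟩ := (atTop_basis' a).eventually_iff.1 hfg_le
  filter_upwards [eventually_ge_atTop T, hg_lim.eventually_ge_atTop 0,
    hg_lim.eventually_ge_atTop ((‖∫ w in a..T, f w ∂μ‖ - ε / 2 * ∫ w in a..T, g w ∂μ) / (ε / 2))]
    with t hTt hnonneg hlarge
  have hgTt : IntervalIntegrable g μ T t := (hg T haT).symm.trans (hg t (haT.trans hTt))
  have hfTt : IntervalIntegrable f μ T t := (hf T haT).symm.trans (hf t (haT.trans hTt))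
  have htail : ‖∫ w in T..t, f w ∂μ‖ ≤ ε / 2 * ∫ w in T..t, g w ∂μ := by
    rw [← intervalIntegral.integral_const_mul]
    exact intervalIntegral.norm_integral_le_of_norm_le hTt
      (.of_forall fun w hw ↦ hT hw.1.le) (hgTt.const_mul _)
  have hhead := (div_le_iff₀' (half_pos hε)).1 hlarge
  rw [Real.norm_of_nonneg hnonneg]
  calc ‖∫ w in a..t, f w ∂μ‖
      = ‖(∫ w in a..T, f w ∂μ) + ∫ w in T..t, f w ∂μ‖ := by
        rw [intervalIntegral.integral_add_adjacent_intervals (hf T haT) hfTt]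
    _ ≤ ‖∫ w in a..T, f w ∂μ‖ + ε / 2 * ∫ w in T..t, g w ∂μ :=
        (norm_add_le _ _).trans (by gcongr)
    _ = (‖∫ w in a..T, f w ∂μ‖ - ε / 2 * ∫ w in a..T, g w ∂μ)
          + ε / 2 * ∫ w in a..t, g w ∂μ := by
        rw [← intervalIntegral.integral_add_adjacent_intervals (hg T haT) hgTt]
        ring
    _ ≤ ε * ∫ w in a..t, g w ∂μ := by linarith

theorem isEquivalent_intervalIntegral {f : ℝ → ℝ} (hf : ∀ t ≥ a, IntervalIntegrable f μ a t)
    (hg : ∀ t ≥ a, IntervalIntegrable g μ a t) (hg_nonneg : ∀ᶠ t in atTop, 0 ≤ g t)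
    (hg_lim : Tendsto (fun t ↦ ∫ w in a..t, g w ∂μ) atTop atTop) (hfg : f ~[atTop] g) :
    (fun t ↦ ∫ w in a..t, f w ∂μ) ~[atTop] fun t ↦ ∫ w in a..t, g w ∂μ := by
  refine (isLittleO_intervalIntegral (fun t ht ↦ (hf t ht).sub (hg t ht)) hg hg_nonneg hg_lim
    hfg.isLittleO).congr' ?_ .rfl
  filter_upwards [eventually_ge_atTop a] with t ht
  exact intervalIntegral.integral_sub (hf t ht) (hg t ht)

theorem tendsto_intervalIntegral_atTop (hg : ∀ t ≥ a, IntervalIntegrable g volume a t) {k : ℝ}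
    (hk : 0 < k) (hkg : ∀ᶠ t in atTop, k ≤ g t) :
    Tendsto (fun t ↦ ∫ w in a..t, g w) atTop atTop := by
  obtain ⟨T, haT, hT⟩ := (atTop_basis' a).eventually_iff.1 hkg
  have hlinear : Tendsto (fun t ↦ (∫ w in a..T, g w) + (t - T) * k) atTop atTop :=
    tendsto_atTop_add_const_left _ _
      ((tendsto_atTop_add_const_right _ (-T) tendsto_id).atTop_mul_const hk)
  refine tendsto_atTop_mono' _ ?_ hlinear
  filter_upwards [eventually_ge_atTop T] with t hTt
  have hgTt : IntervalIntegrable g volume T t := (hg T haT).symm.trans (hg t (haT.trans hTt))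
  calc (∫ w in a..T, g w) + (t - T) * k
      = (∫ w in a..T, g w) + ∫ _ in T..t, k := by
        rw [intervalIntegral.integral_const, smul_eq_mul]
    _ ≤ (∫ w in a..T, g w) + ∫ w in T..t, g w := by
        gcongr
        exact intervalIntegral.integral_mono_on hTt intervalIntegrable_const hgTt
          fun w hw ↦ hT hw.1
    _ = ∫ w in a..t, g w := intervalIntegral.integral_add_adjacent_intervals (hg T haT) hgTt

end IntegralAsymptotics

section ExpPrimitive

variable {a b : ℝ} {f g : ℝ → ℝ}

theorem continuousOn_exp_primitive (hg : ContinuousOn g (Icc a b)) (hab : a ≤ b) :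
    ContinuousOn (fun t ↦ Real.exp (∫ w in a..t, g w)) (Icc a b) := by
  rw [← uIcc_of_le hab] at hg ⊢
  exact (intervalIntegral.continuousOn_primitive_interval hg.integrableOn_uIcc).rexp

theorem integral_mul_exp_primitive (hg : ContinuousOn g (Icc a b)) (hab : a ≤ b) :
    ∫ t in a..b, g t * Real.exp (∫ w in a..t, g w) = Real.exp (∫ w in a..b, g w) - 1 := by
  have hexp := continuousOn_exp_primitive hg hab
  have hderiv : ∀ t ∈ Ioo a b, HasDerivAt (fun t ↦ Real.exp (∫ w in a..t, g w))
      (g t * Real.exp (∫ w in a..t, g w)) t := fun t ht ↦ by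
    have hg_at : ContinuousAt g t := hg.continuousAt (Icc_mem_nhds ht.1 ht.2)
    have hg_int : IntervalIntegrable g volume a t :=
      (hg.mono (Icc_subset_Icc_right ht.2.le)).intervalIntegrable_of_Icc ht.1.le
    have hg_meas : StronglyMeasurableAtFilter g (𝓝 t) :=
      (hg.mono Ioo_subset_Icc_self).stronglyMeasurableAtFilter isOpen_Ioo t ht
    rw [mul_comm]
    exact (intervalIntegral.integral_hasDerivAt_right hg_int hg_meas hg_at).exp
  rw [intervalIntegral.integral_eq_sub_of_hasDerivAt_of_le hab hexp hderiv
    ((hg.mul hexp).intervalIntegrable_of_Icc hab), intervalIntegral.integral_same, Real.exp_zero]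

theorem isEquivalent_integral_mul_exp_primitive (hf : ContinuousOn f (Ici a))
    (hg : ContinuousOn g (Ici a)) (hg_nonneg : ∀ᶠ t in atTop, 0 ≤ g t)
    (hg_lim : Tendsto (fun t ↦ ∫ w in a..t, g w) atTop atTop) (hfg : f ~[atTop] g) :
    (fun t ↦ ∫ w in a..t, f w * Real.exp (∫ v in a..w, g v)) ~[atTop]
      fun t ↦ Real.exp (∫ w in a..t, g w) := by
  have hexp_lim : Tendsto (fun t ↦ Real.exp (∫ w in a..t, g w)) atTop atTop :=
    Real.tendsto_exp_atTop.comp hg_lim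
  have hintegral : (fun t ↦ Real.exp (∫ w in a..t, g w) - 1) =ᶠ[atTop]
      fun t ↦ ∫ w in a..t, g w * Real.exp (∫ v in a..w, g v) := by
    filter_upwards [eventually_ge_atTop a] with t ht
    exact (integral_mul_exp_primitive (hg.mono Icc_subset_Ici_self) ht).symm
  have hintegrable {h : ℝ → ℝ} (hh : ContinuousOn h (Ici a)) (t : ℝ) (ht : t ≥ a) :
      IntervalIntegrable (fun w ↦ h w * Real.exp (∫ v in a..w, g v)) volume a t :=
    ((hh.mono Icc_subset_Ici_self).mul (continuousOn_exp_primitive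
      (hg.mono Icc_subset_Ici_self) ht)).intervalIntegrable_of_Icc ht
  have hnonneg : ∀ᶠ t in atTop, 0 ≤ g t * Real.exp (∫ v in a..t, g v) :=
    hg_nonneg.mono fun t ht ↦ mul_nonneg ht (Real.exp_nonneg _)
  have hlim : Tendsto (fun t ↦ ∫ w in a..t, g w * Real.exp (∫ v in a..w, g v)) atTop atTop :=
    (tendsto_atTop_add_const_right _ (-1) hexp_lim).congr' hintegral
  refine (isEquivalent_intervalIntegral (hintegrable hf) (hintegrable hg) hnonneg hlim
    (hfg.mul .refl)).trans ?_
  exact hintegral.symm.trans_isEquivalent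
    (IsEquivalent.refl.add_const_of_norm_tendsto_atTop (c := -1)
      (tendsto_norm_atTop_atTop.comp hexp_lim))

theorem isEquivalent_const_add_integral_mul_exp_primitive_add_const (hf : ContinuousOn f (Ici a))
    (hf_lim : Tendsto f atTop atTop) (k c : ℝ) :
    (fun t ↦ k + ∫ w in a..t, f w * Real.exp (∫ v in a..w, (f v + c))) ~[atTop]
      fun t ↦ Real.exp (∫ w in a..t, (f w + c)) := by
  have hfc : ContinuousOn (fun t ↦ f t + c) (Ici a) := hf.add continuousOn_const
  have hfc_lim : Tendsto (fun t ↦ f t + c) atTop atTop := tendsto_atTop_add_const_right _ _ hf_lim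
  have hprimitive_lim : Tendsto (fun t ↦ ∫ w in a..t, (f w + c)) atTop atTop :=
    tendsto_intervalIntegral_atTop
      (fun t ht ↦ (hfc.mono Icc_subset_Ici_self).intervalIntegrable_of_Icc ht) one_pos
      (hfc_lim.eventually_ge_atTop 1)
  have hf_equiv : f ~[atTop] fun t ↦ f t + c :=
    (IsEquivalent.refl.add_const_of_norm_tendsto_atTop
      (tendsto_norm_atTop_atTop.comp hf_lim)).symm
  exact (isEquivalent_integral_mul_exp_primitive hf hfc (hfc_lim.eventually_ge_atTop 0)
    hprimitive_lim hf_equiv).const_add_of_norm_tendsto_atTop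
      (tendsto_norm_atTop_atTop.comp (Real.tendsto_exp_atTop.comp hprimitive_lim))

end ExpPrimitive

section PowerLaw

variable {r p : ℝ}

theorem integral_const_mul_add_one_rpow (hp : -1 < p) (t : ℝ) :
    ∫ w in (0 : ℝ)..t, r * (w + 1) ^ p = r / (p + 1) * ((t + 1) ^ (p + 1) - 1) := by
  rw [intervalIntegral.integral_const_mul,
    intervalIntegral.integral_comp_add_right (fun w : ℝ ↦ w ^ p), integral_rpow (.inl hp), zero_add,
    Real.one_rpow]
  ring

theorem continuous_const_mul_add_one_rpow (hp : 0 ≤ p) :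
    Continuous fun t : ℝ ↦ r * (t + 1) ^ p :=
  ((continuous_add_const 1).rpow_const fun _ ↦ .inr hp).const_mul r

theorem tendsto_const_mul_add_one_rpow_atTop (hr : 0 < r) (hp : 0 < p) :
    Tendsto (fun t : ℝ ↦ r * (t + 1) ^ p) atTop atTop :=
  ((tendsto_rpow_atTop hp).comp (tendsto_atTop_add_const_right _ 1 tendsto_id)).const_mul_atTop hr

end PowerLaw

theorem charfun_power_law_degenerate_general (rint R : ℝ → ℝ) (φ : ℝ → ℝ → ℝ)
    (hcont : ContinuousOn rint (Ici 0)) (hlim : Tendsto rint atTop atTop)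
    (hR : ∀ t ≥ 0, R t = ∫ w in (0 : ℝ)..t, rint w)
    (hφ : ∀ t ≥ 0, ∀ s, φ t s = Real.exp (-R t - t * s ^ 2 / 2) *
      (1 + ∫ w in (0 : ℝ)..t, rint w * Real.exp (R w + w * s ^ 2 / 2))) :
    ∀ s : ℝ, Tendsto (fun t ↦ φ t s) atTop (𝓝 1) := by
  intro s
  have hexponent : ∀ t ≥ 0, R t + t * s ^ 2 / 2 = ∫ w in (0 : ℝ)..t, (rint w + s ^ 2 / 2) :=
    fun t ht ↦ by
      rw [hR t ht, intervalIntegral.integral_add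
        ((hcont.mono Icc_subset_Ici_self).intervalIntegrable_of_Icc ht) intervalIntegrable_const,
        intervalIntegral.integral_const, smul_eq_mul, sub_zero, mul_div_assoc]
  have hequiv :=
    isEquivalent_const_add_integral_mul_exp_primitive_add_const hcont hlim 1 (s ^ 2 / 2)
  have hratio := (isEquivalent_iff_tendsto_one (.of_forall fun _ ↦ Real.exp_ne_zero _)).1 hequiv
  refine hratio.congr' ?_
  filter_upwards [eventually_ge_atTop 0] with t ht
  have hintegral : ∫ w in (0 : ℝ)..t, rint w * Real.exp (R w + w * s ^ 2 / 2) =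
      ∫ w in (0 : ℝ)..t, rint w * Real.exp (∫ v in (0 : ℝ)..w, (rint v + s ^ 2 / 2)) :=
    intervalIntegral.integral_congr fun w hw ↦ by
      rw [uIcc_of_le ht] at hw
      simp only [hexponent w hw.1]
  rw [hφ t ht, hintegral, ← neg_add', hexponent t ht, Real.exp_neg, Pi.div_apply, div_eq_inv_mul]

/-- For power-law resetting intensity `r(t) = r·(t+1)^p` with `p > 0`, the
characteristic function
`φ_t(s) = e^{-R(t) - t·s²/2}·(1 + ∫₀ᵗ r(w)·e^{R(w) + w·s²/2} dw)` converges
pointwise to `1` as `t → ∞`: convergence in distribution to the point mass at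
the resetting point `0`. -/
theorem charfun_power_law_degenerate (r p : ℝ) (hr : 0 < r) (hp : 0 < p)
    (rint R : ℝ → ℝ) (φ : ℝ → ℝ → ℝ)
    (hrint : ∀ t, rint t = r * (t + 1) ^ p)
    (hR : ∀ t, R t = r / (p + 1) * ((t + 1) ^ (p + 1) - 1))
    (hφ : ∀ t s, φ t s = Real.exp (-R t - t * s ^ 2 / 2) *
      (1 + ∫ w in (0 : ℝ)..t, rint w * Real.exp (R w + w * s ^ 2 / 2))) :
    ∀ s : ℝ, Tendsto (fun t => φ t s) atTop (nhds 1) := by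
  obtain rfl : rint = fun t ↦ r * (t + 1) ^ p := funext hrint
  exact charfun_power_law_degenerate_general _ R φ
    (continuous_const_mul_add_one_rpow hp.le).continuousOn
    (tendsto_const_mul_add_one_rpow_atTop hr hp)
    (fun t _ ↦ by rw [hR, integral_const_mul_add_one_rpow (by linarith)]) fun t _ ↦ hφ t
end

section
/- Let r > 0 and p ∈ (−1, 0), set r(t) = r·(t+1)^p and R(t) = (r/(p+1))·((t+1)^{p+1} − 1), and define φ_t(s) = e^{−R(t) − t s²/2}·( 1 + ∫_0^t r(w)·e^{R(w) + w s²/2} dw ). Then for every s ∈ ℝ, lim_{t→∞} φ_t(s)·( 1 + s²/(2·r·(t+1)^p) ) = 1; i.e., the distribution of the resetting process is asymptotically Laplace with time-dependent scale (2·r·(t+1)^p)^{−1/2}. -/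
open MeasureTheory Filter

/-!
For fixed `s`, the function `φ_t(s)` solves the forward equation
`∂ₜφ = r(t) (1 - φ) - (s² / 2) φ`, whose instantaneous equilibrium
`r(t) / (r(t) + s² / 2) = 1 / (1 + s² / (2 r(t)))` is the Laplace characteristic function.
The relative deviation `d = φ (1 + s² / (2 r)) - 1` from this moving equilibrium satisfies
`d' = -(r + s² / 2 + η) d - η` with `|η| ≤ |r' / r|`. When `s ≠ 0` and `r' / r → 0`, this linear
equation is uniformly damped and its forcing vanishes, so `d → 0`. When `s = 0`, `φ` is
constantly `1`.
-/

open Set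
open scoped Topology

section LinearDecay

theorem tendsto_gronwallBound_sub_atTop {K : ℝ} (hK : K < 0) (δ ε a : ℝ) :
    Tendsto (fun t => gronwallBound δ K ε (t - a)) atTop (𝓝 (-(ε / K))) := by
  have hexp : Tendsto (fun t : ℝ => Real.exp (K * (t - a))) atTop (𝓝 0) :=
    Real.tendsto_exp_atBot.comp
      ((tendsto_atTop_add_const_right _ (-a) tendsto_id).const_mul_atTop_of_neg hK)
  simpa [gronwallBound_of_K_ne_0 hK.ne] using
    (hexp.const_mul δ).add ((hexp.sub_const 1).const_mul (ε / K))

theorem le_gronwallBound_of_hasDerivAt_of_le {f f' : ℝ → ℝ} {K ε a t : ℝ}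
    (hf : ∀ x, a ≤ x → HasDerivAt f (f' x) x) (hle : ∀ x, a ≤ x → f' x ≤ K * f x + ε)
    (ht : a ≤ t) : f t ≤ gronwallBound (f a) K ε (t - a) :=
  le_gronwallBound_of_liminf_deriv_right_le
    (fun x hx => (hf x hx.1).continuousAt.continuousWithinAt)
    (fun x hx _ hr => (hf x hx.1).hasDerivWithinAt.liminf_right_slope_le hr)
    le_rfl (fun x hx => hle x hx.1) t ⟨ht, le_rfl⟩

theorem tendsto_zero_of_hasDerivAt_le_neg_mul_add {z z' e : ℝ → ℝ} {c : ℝ} (hc : 0 < c)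
    (hz_nonneg : ∀ᶠ t in atTop, 0 ≤ z t) (hz : ∀ᶠ t in atTop, HasDerivAt z (z' t) t)
    (hle : ∀ᶠ t in atTop, z' t ≤ -c * z t + e t) (he : Tendsto e atTop (𝓝 0)) :
    Tendsto z atTop (𝓝 0) := by
  refine tendsto_order.2 ⟨fun δ hδ => hz_nonneg.mono fun t ht => hδ.trans_le ht, fun δ hδ => ?_⟩
  have he_le : ∀ᶠ t in atTop, e t ≤ c * (δ / 2) := he.eventually_le_const (by positivity)
  obtain ⟨T, hT⟩ := eventually_atTop.1 (hz.and (hle.and he_le))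
  have hbound : ∀ t, T ≤ t → z t ≤ gronwallBound (z T) (-c) (c * (δ / 2)) (t - T) := fun t ht =>
    le_gronwallBound_of_hasDerivAt_of_le (fun x hx => (hT x hx).1)
      (fun x hx => by linarith [(hT x hx).2.1, (hT x hx).2.2]) ht
  have hlimit : -(c * (δ / 2) / -c) < δ := by
    rw [div_neg, neg_neg, mul_div_cancel_left₀ _ hc.ne']
    exact half_lt_self hδ
  filter_upwards [eventually_ge_atTop T,
    (tendsto_gronwallBound_sub_atTop (neg_lt_zero.2 hc) _ _ T).eventually_lt_const hlimit]
    with t ht hlt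
  exact (hbound t ht).trans_lt hlt

theorem tendsto_zero_of_hasDerivAt_neg_smul_add {E : Type*} [NormedAddCommGroup E]
    [InnerProductSpace ℝ E] {y b : ℝ → E} {k : ℝ → ℝ} {c : ℝ} (hc : 0 < c)
    (hy : ∀ᶠ t in atTop, HasDerivAt y (-k t • y t + b t) t)
    (hk : ∀ᶠ t in atTop, c ≤ k t) (hb : Tendsto b atTop (𝓝 0)) :
    Tendsto y atTop (𝓝 0) := by
  have henergy : ∀ᶠ t in atTop,
      2 * inner ℝ (y t) (-k t • y t + b t) ≤ -c * ‖y t‖ ^ 2 + ‖b t‖ ^ 2 / c := by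
    filter_upwards [hk] with t hkt
    have hyoung : 2 * (‖y t‖ * ‖b t‖) ≤ c * ‖y t‖ ^ 2 + ‖b t‖ ^ 2 / c := by
      have := sq_nonneg (c * ‖y t‖ - ‖b t‖)
      field_simp
      linarith
    have hdamp : c * ‖y t‖ ^ 2 ≤ k t * ‖y t‖ ^ 2 := by gcongr
    rw [inner_add_right, inner_smul_right, real_inner_self_eq_norm_sq]
    linarith [real_inner_le_norm (y t) (b t)]
  have hforcing : Tendsto (fun t => ‖b t‖ ^ 2 / c) atTop (𝓝 0) := by
    simpa using (hb.norm.pow 2).div_const c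
  have hsq : Tendsto (fun t => ‖y t‖ ^ 2) atTop (𝓝 0) :=
    tendsto_zero_of_hasDerivAt_le_neg_mul_add hc (.of_forall fun t => sq_nonneg _)
      (hy.mono fun t ht => ht.norm_sq) henergy hforcing
  exact tendsto_zero_iff_norm_tendsto_zero.2 (by simpa using hsq.sqrt)

end LinearDecay

section MovingEquilibrium

variable {q y : ℝ → ℝ} {a t : ℝ}

theorem hasDerivAt_mul_one_add_div_sub_one (ha : 0 ≤ a) (hq_pos : 0 < q t)
    (hq : DifferentiableAt ℝ q t) (hy : HasDerivAt y (q t * (1 - y t) - a * y t) t) :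
    HasDerivAt (fun u => y u * (1 + a / q u) - 1)
      (-(q t + a + a / (q t + a) * logDeriv q t) * (y t * (1 + a / q t) - 1) +
        -(a / (q t + a) * logDeriv q t)) t := by
  have hsum : q t + a ≠ 0 := by positivity
  refine ((hy.mul (((hasDerivAt_const t a).div hq.hasDerivAt hq_pos.ne').const_add 1)).sub_const
    1).congr_deriv ?_
  rw [logDeriv_apply, Pi.div_apply]
  field_simp
  ring

theorem tendsto_mul_one_add_div_of_hasDerivAt (ha : 0 < a) (hq_pos : ∀ᶠ t in atTop, 0 < q t)
    (hq : ∀ᶠ t in atTop, DifferentiableAt ℝ q t) (hlog : Tendsto (logDeriv q) atTop (𝓝 0))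
    (hy : ∀ᶠ t in atTop, HasDerivAt y (q t * (1 - y t) - a * y t) t) :
    Tendsto (fun t => y t * (1 + a / q t)) atTop (𝓝 1) := by
  have hdrift_le : ∀ᶠ t in atTop, ‖a / (q t + a) * logDeriv q t‖ ≤ ‖logDeriv q t‖ := by
    filter_upwards [hq_pos] with t hqt
    rw [norm_mul, Real.norm_of_nonneg (by positivity : 0 ≤ a / (q t + a))]
    exact mul_le_of_le_one_left (norm_nonneg _) ((div_le_one (by positivity)).2 (by linarith))
  have hdrift : Tendsto (fun t => a / (q t + a) * logDeriv q t) atTop (𝓝 0) :=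
    squeeze_zero_norm' hdrift_le (by simpa using hlog.norm)
  have hdamp : ∀ᶠ t in atTop, a / 2 ≤ q t + a + a / (q t + a) * logDeriv q t := by
    filter_upwards [hq_pos, hdrift.eventually_const_le (by linarith : -(a / 2) < 0)] with t hqt hge
    linarith
  have hdev : Tendsto (fun t => y t * (1 + a / q t) - 1) atTop (𝓝 0) := by
    refine tendsto_zero_of_hasDerivAt_neg_smul_add (half_pos ha) ?_ hdamp
      (by simpa using hdrift.neg)
    filter_upwards [hq_pos, hq, hy] with t hqt hqd hyt
    exact hasDerivAt_mul_one_add_div_sub_one ha.le hqt hqd hyt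
  simpa using hdev.add_const 1

end MovingEquilibrium

section Resetting

/-- The characteristic function at frequency `s` and time `t` of Brownian motion reset to its
starting point `0` with intensity `rate`. The cumulative intensity `R`, the primitive of `rate`
vanishing at `0`, is a separate argument so that it may be given in closed form. -/
noncomputable def resettingCharFun (rate R : ℝ → ℝ) (t s : ℝ) : ℝ :=
  Real.exp (-R t - t * s ^ 2 / 2) *
    (1 + ∫ w in (0 : ℝ)..t, rate w * Real.exp (R w + w * s ^ 2 / 2))

theorem hasDerivAt_integral_of_continuousOn_Ici {E : Type*} [NormedAddCommGroup E]
    [NormedSpace ℝ E] [CompleteSpace E] {f : ℝ → E} {a t : ℝ}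
    (hf : ContinuousOn f (Ici a)) (ht : a < t) :
    HasDerivAt (fun u => ∫ w in a..u, f w) (f t) t :=
  intervalIntegral.integral_hasDerivAt_right
    (hf.mono (uIcc_of_le ht.le ▸ Icc_subset_Ici_self)).intervalIntegrable
    ((hf.mono Ioi_subset_Ici_self).stronglyMeasurableAtFilter isOpen_Ioi t ht)
    (hf.continuousAt (Ici_mem_nhds ht))

variable {rate R : ℝ → ℝ} {t : ℝ}

theorem continuousOn_rate_mul_exp (hrate : ContinuousOn rate (Ici 0))
    (hR : ∀ t, 0 ≤ t → HasDerivAt R (rate t) t) (s : ℝ) :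
    ContinuousOn (fun w => rate w * Real.exp (R w + w * s ^ 2 / 2)) (Ici 0) := by
  have hR_cont : ContinuousOn R (Ici 0) := fun t ht => (hR t ht).continuousAt.continuousWithinAt
  fun_prop

theorem hasDerivAt_resettingCharFun (hrate : ContinuousOn rate (Ici 0))
    (hR : ∀ t, 0 ≤ t → HasDerivAt R (rate t) t) (s : ℝ) (ht : 0 < t) :
    HasDerivAt (fun t => resettingCharFun rate R t s)
      (rate t * (1 - resettingCharFun rate R t s) - s ^ 2 / 2 * resettingCharFun rate R t s) t := by
  have hexp := ((hR t ht.le).neg.sub (((hasDerivAt_id t).mul_const (s ^ 2)).div_const 2)).exp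
  have hint :=
    (hasDerivAt_integral_of_continuousOn_Ici (continuousOn_rate_mul_exp hrate hR s) ht).const_add 1
  have hcancel : Real.exp (-R t - t * s ^ 2 / 2) * Real.exp (R t + t * s ^ 2 / 2) = 1 := by
    rw [← Real.exp_add, Real.exp_eq_one_iff]
    ring
  refine (hexp.mul hint).congr_deriv ?_
  simp only [resettingCharFun, Pi.sub_apply, Pi.neg_apply, id_eq]
  linear_combination rate t * hcancel

theorem resettingCharFun_zero_right (hrate : ContinuousOn rate (Ici 0)) (hR_zero : R 0 = 0)
    (hR : ∀ t, 0 ≤ t → HasDerivAt R (rate t) t) (ht : 0 ≤ t) :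
    resettingCharFun rate R t 0 = 1 := by
  have hsubset : uIcc 0 t ⊆ Ici 0 := uIcc_of_le ht ▸ Icc_subset_Ici_self
  have hcont : ContinuousOn (fun w => rate w * Real.exp (R w)) (Ici 0) := by
    simpa using continuousOn_rate_mul_exp hrate hR 0
  have hint : ∫ w in (0 : ℝ)..t, rate w * Real.exp (R w) = Real.exp (R t) - 1 := by
    rw [intervalIntegral.integral_eq_sub_of_hasDerivAt (f := fun w => Real.exp (R w))
      (fun w hw => (hR w (hsubset hw)).exp.congr_deriv (mul_comm _ _))
      (hcont.mono hsubset).intervalIntegrable, hR_zero, Real.exp_zero]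
  simp [resettingCharFun, hint, ← Real.exp_add]

theorem tendsto_resettingCharFun_mul_one_add_div (hrate : ContinuousOn rate (Ici 0))
    (hrate_pos : ∀ᶠ t in atTop, 0 < rate t) (hrate_diff : ∀ᶠ t in atTop, DifferentiableAt ℝ rate t)
    (hlog : Tendsto (logDeriv rate) atTop (𝓝 0)) (hR_zero : R 0 = 0)
    (hR : ∀ t, 0 ≤ t → HasDerivAt R (rate t) t) (s : ℝ) :
    Tendsto (fun t => resettingCharFun rate R t s * (1 + s ^ 2 / (2 * rate t))) atTop (𝓝 1) := by
  rcases eq_or_ne s 0 with rfl | hs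
  · refine tendsto_const_nhds.congr' ?_
    filter_upwards [eventually_ge_atTop 0] with t ht
    simp [resettingCharFun_zero_right hrate hR_zero hR ht]
  · simp only [← div_div]
    refine tendsto_mul_one_add_div_of_hasDerivAt (by positivity) hrate_pos hrate_diff hlog ?_
    filter_upwards [eventually_gt_atTop 0] with t ht
    exact hasDerivAt_resettingCharFun hrate hR s ht

end Resetting

section PowerLaw

variable {r p t : ℝ}

theorem hasDerivAt_const_mul_add_one_rpow (r p : ℝ) (ht : -1 < t) :
    HasDerivAt (fun t : ℝ => r * (t + 1) ^ p) (r * (p * (t + 1) ^ (p - 1))) t := by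
  have hbase : t + 1 ≠ 0 := by linarith
  simpa using (((hasDerivAt_id t).add_const 1).rpow_const (p := p) (.inl hbase)).const_mul r

theorem hasDerivAt_div_mul_add_one_rpow_sub_one (r : ℝ) (hp : p ≠ -1) (ht : -1 < t) :
    HasDerivAt (fun t : ℝ => r / (p + 1) * ((t + 1) ^ (p + 1) - 1)) (r * (t + 1) ^ p) t := by
  have hp' : p + 1 ≠ 0 := by rwa [Ne, ← sub_neg_eq_add, sub_eq_zero]
  have h := (hasDerivAt_const_mul_add_one_rpow (r / (p + 1)) (p + 1) ht).sub_const (r / (p + 1))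
  simp only [← mul_sub_one] at h
  refine h.congr_deriv ?_
  rw [add_sub_cancel_right]
  field_simp

theorem logDeriv_const_mul_add_one_rpow (hr : r ≠ 0) (p : ℝ) (ht : -1 < t) :
    logDeriv (fun t : ℝ => r * (t + 1) ^ p) t = p / (t + 1) := by
  have hbase : 0 < t + 1 := by linarith
  rw [logDeriv_apply, (hasDerivAt_const_mul_add_one_rpow r p ht).deriv,
    Real.rpow_sub_one hbase.ne']
  field_simp

theorem tendsto_logDeriv_const_mul_add_one_rpow (hr : r ≠ 0) (p : ℝ) :
    Tendsto (logDeriv fun t : ℝ => r * (t + 1) ^ p) atTop (𝓝 0) := by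
  refine ((tendsto_atTop_add_const_right _ 1 tendsto_id).const_div_atTop p).congr' ?_
  filter_upwards [eventually_gt_atTop (-1)] with t ht
  exact (logDeriv_const_mul_add_one_rpow hr p ht).symm

theorem charfun_power_law_asymp_laplace_general {R : ℝ → ℝ} (hr : 0 < r) (p : ℝ) (hR_zero : R 0 = 0)
    (hR : ∀ t, 0 ≤ t → HasDerivAt R (r * (t + 1) ^ p) t) (s : ℝ) :
    Tendsto (fun t => resettingCharFun (fun w => r * (w + 1) ^ p) R t s *
      (1 + s ^ 2 / (2 * r * (t + 1) ^ p))) atTop (𝓝 1) := by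
  have hrate (t : ℝ) (ht : -1 < t) := hasDerivAt_const_mul_add_one_rpow r p ht
  have hpos (t : ℝ) (ht : -1 < t) : 0 < r * (t + 1) ^ p :=
    mul_pos hr (Real.rpow_pos_of_pos (by linarith) p)
  have hgt : ∀ᶠ t : ℝ in atTop, -1 < t := eventually_gt_atTop (-1)
  simpa only [mul_assoc] using tendsto_resettingCharFun_mul_one_add_div
    (fun t ht => (hrate t (neg_one_lt_zero.trans_le ht)).continuousAt.continuousWithinAt)
    (hgt.mono hpos) (hgt.mono fun t ht => (hrate t ht).differentiableAt)
    (tendsto_logDeriv_const_mul_add_one_rpow hr.ne' p) hR_zero hR s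

end PowerLaw

/-- For power-law resetting intensity `r(t) = r·(t+1)^p` with `p ∈ (-1,0)`, the
characteristic function
`φ_t(s) = e^{-R(t) - t·s²/2}·(1 + ∫₀ᵗ r(w)·e^{R(w) + w·s²/2} dw)` satisfies
`φ_t(s)·(1 + s²/(2·r·(t+1)^p)) → 1` as `t → ∞`: the distribution is
asymptotically Laplace with time-dependent scale `(2·r·(t+1)^p)^{-1/2}`. -/
theorem charfun_power_law_asymp_laplace (r p : ℝ) (hr : 0 < r)
    (hp₁ : -1 < p) (hp₂ : p < 0)
    (rint R : ℝ → ℝ) (φ : ℝ → ℝ → ℝ)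
    (hrint : ∀ t, rint t = r * (t + 1) ^ p)
    (hR : ∀ t, R t = r / (p + 1) * ((t + 1) ^ (p + 1) - 1))
    (hφ : ∀ t s, φ t s = Real.exp (-R t - t * s ^ 2 / 2) *
      (1 + ∫ w in (0 : ℝ)..t, rint w * Real.exp (R w + w * s ^ 2 / 2))) :
    ∀ s : ℝ,
      Tendsto (fun t => φ t s * (1 + s ^ 2 / (2 * r * (t + 1) ^ p))) atTop (nhds 1) := by
  intro s
  have hR_deriv (t : ℝ) (ht : 0 ≤ t) : HasDerivAt R (r * (t + 1) ^ p) t :=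
    funext hR ▸ hasDerivAt_div_mul_add_one_rpow_sub_one r hp₁.ne' (neg_one_lt_zero.trans_le ht)
  simpa only [hφ, hrint, resettingCharFun] using
    charfun_power_law_asymp_laplace_general hr p (by simp [hR]) hR_deriv s
end
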